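/- Let A be a dehyperplane arrangement in an n-simanifold T. Then the number of chambers of A equals Σ_{X ∈ L_A} (−1)^{rk X} μ(T, X), where T is the minimum element of L_A. -/

import Mathlib

open Set

noncomputable section

/-- The ambient Euclidean space `ℝ^N`. -/
abbrev Euc (N : ℕ) := EuclideanSpace ℝ (Fin N)

/-- An `i`-simanifold: a nonempty (open, i.e. boundaryless) contractible topological
`i`-manifold, realized as a subset of the ambient space. -/
def IsSimanifold {N : ℕ} (i : ℕ) (S : Set (Euc N)) : Prop :=
  S.Nonempty ∧ ContractibleSpace S ∧ Nonempty (ChartedSpace (EuclideanSpace ℝ (Fin i)) S)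

/-- A dehyperplane in an `n`-simanifold `T`: an `(n-1)`-simanifold `P ⊆ T` cutting `T`
into two `n`-simanifolds `plus` and `minus`, with `plus ⊔ P ⊔ minus = T` and
`closure plus ∩ closure minus = P`. -/
structure Dehyperplane (N n : ℕ) (T : Set (Euc N)) where
  P : Set (Euc N)
  plus : Set (Euc N)
  minus : Set (Euc N)
  simP : IsSimanifold (n - 1) P
  simPlus : IsSimanifold n plus
  simMinus : IsSimanifold n minus
  union_eq : plus ∪ P ∪ minus = T
  disj_pP : Disjoint plus P
  disj_pm : Disjoint plus minus
  disj_Pm : Disjoint P minus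
  closure_eq : closure plus ∩ closure minus = P

/-- `L_A`: the set of nonempty intersections of elements of `A` (empty intersection `T`),
the flats of `A`. (Ordered by reverse inclusion: `X ≤ Y ↔ Y ⊆ X`.) -/
def flats {N n : ℕ} {T : Set (Euc N)} (A : Set (Dehyperplane N n T)) : Set (Set (Euc N)) :=
  {X | X.Nonempty ∧ ∃ B ⊆ A, X = T ∩ ⋂ P ∈ B, P.P}

/-- A dehyperplane arrangement (DA) in the `n`-simanifold `T`. -/
def IsDA {N : ℕ} (n : ℕ) (T : Set (Euc N)) (A : Set (Dehyperplane N n T)) : Prop :=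
  A.Finite ∧ ∀ P ∈ A, ∀ X ∈ flats A, (P.P ∩ X).Nonempty →
    X ⊆ P.P ∨ ∃ i, 1 ≤ i ∧ i ≤ n ∧ IsSimanifold (i - 1) (P.P ∩ X) ∧
      IsSimanifold i (P.plus ∩ X) ∧ IsSimanifold i (P.minus ∩ X)

/-- `P^ε` for a sign `ε ∈ {+,0,-}`. -/
def Dehyperplane.part {N n : ℕ} {T : Set (Euc N)} (P : Dehyperplane N n T) :
    SignType → Set (Euc N)
  | .pos => P.plus
  | .zero => P.P
  | .neg => P.minus

/-- A face of `A`: a nonempty set of the form `⋂_{P ∈ A} P^{ε_P}`. -/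
def IsFace {N n : ℕ} {T : Set (Euc N)} (A : Set (Dehyperplane N n T))
    (F : Set (Euc N)) : Prop :=
  F.Nonempty ∧ ∃ ε : Dehyperplane N n T → SignType, F = T ∩ ⋂ P ∈ A, P.part (ε P)

/-- A chamber of `A`: a face with `ε_P ≠ 0` for all `P ∈ A`. -/
def IsChamber {N n : ℕ} {T : Set (Euc N)} (A : Set (Dehyperplane N n T))
    (F : Set (Euc N)) : Prop :=
  F.Nonempty ∧ ∃ ε : Dehyperplane N n T → SignType,
    (∀ P ∈ A, ε P ≠ 0) ∧ F = T ∩ ⋂ P ∈ A, P.part (ε P)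

/-- The restriction `A^X = {P ∩ X | P ∈ A, X ⊄ P, P ∩ X ≠ ∅}`, as dehyperplanes in `X`
(viewed as an `m`-simanifold), with halves `P^± ∩ X`. -/
def restrict {N n : ℕ} {T : Set (Euc N)} (A : Set (Dehyperplane N n T)) (m : ℕ)
    (X : Set (Euc N)) : Set (Dehyperplane N m X) :=
  {Q | ∃ P ∈ A, ¬ X ⊆ P.P ∧ (P.P ∩ X).Nonempty ∧
    Q.P = P.P ∩ X ∧ Q.plus = P.plus ∩ X ∧ Q.minus = P.minus ∩ X}

/-- The dimension of a subset of `ℝ^N`: the largest `i` such that `S` contains an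
`i`-simanifold. -/
def sdim {N : ℕ} (S : Set (Euc N)) : ℕ :=
  sSup {i | ∃ T : Set (Euc N), IsSimanifold i T ∧ T ⊆ S}

/-!
Every flat `X` satisfies the Euler relation `∑ (-1) ^ dim F = (-1) ^ dim X`, the sum being over the
faces `F ⊆ X`. Indeed, cutting a flat by the elements of the arrangement one after the other, each
cut of a connected piece is either trivial or replaces it by a connected piece of codimension one
and two connected pieces of full dimension, so that the alternating sum is preserved. Since `F ⊆ X`
if and only if the smallest flat containing `F` lies in `X`, Möbius inversion over the flats leaves
only the faces contained in no flat but `T`; these are the chambers.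

That the two halves of a cut are connected rests on a local form of the Jordan–Brouwer theorem:
locally, a submanifold of codimension one has exactly two sides. This follows from the reduced
homology mod 2 of complements of embedded cubes, computed with Mayer–Vietoris sequences. Affine
chains suffice because only open subsets of normed spaces are involved, and passing to complements
of cones over the sets in question trades homology in degree zero for a higher one.
-/

/-! ### Affine chains -/

/-- Chains mod 2 of affine simplices, a simplex being the list of its vertices. The empty list is
a simplex, so that the complex is augmented and computes reduced homology. Degrees count vertices:
they are one more than the dimension. -/
abbrev AffineChain (V : Type*) := List V →₀ ZMod 2

namespace AffineChain

section Boundary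

variable {V M : Type*} [AddCommGroup M] [Module (ZMod 2) M]

/-- The chain consisting of the single simplex with vertices `l`. -/
abbrev simplex (l : List V) : AffineChain V := Finsupp.single l 1

lemma hom_ext {f g : AffineChain V →ₗ[ZMod 2] M} (h : ∀ l, f (simplex l) = g (simplex l)) :
    f = g :=
  Finsupp.lhom_ext' fun l => LinearMap.ext_ring (h l)

lemma map_mem_of_mem_supported {S : Set (List V)} {f : AffineChain V →ₗ[ZMod 2] M}
    {p : Submodule (ZMod 2) M} (h : ∀ l ∈ S, f (simplex l) ∈ p) {z : AffineChain V}
    (hz : z ∈ Finsupp.supported (ZMod 2) (ZMod 2) S) : f z ∈ p := by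
  rw [Finsupp.supported_eq_span_single] at hz
  refine (Submodule.span_le (p := p.comap f)).2 ?_ hz
  rintro _ ⟨l, hl, rfl⟩
  exact h l hl

lemma eq_of_add_eq_zero {a b : M} (h : a + b = 0) : a = b := by
  rw [← ZModModule.sub_eq_add, sub_eq_zero] at h
  exact h

/-- The cone with apex `v`: the linear operator prepending `v` to every simplex. -/
def cone (v : V) : AffineChain V →ₗ[ZMod 2] AffineChain V :=
  Finsupp.lmapDomain _ _ (List.cons v)

@[simp]
lemma cone_simplex (v : V) (l : List V) : cone v (simplex l) = simplex (v :: l) := by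
  simp [cone]

/-- The boundary of a simplex: the sum of the faces omitting one vertex. -/
def simplexBoundary : List V → AffineChain V
  | [] => 0
  | v :: l => simplex l + cone v (simplexBoundary l)

/-- The boundary operator of the augmented complex of affine chains. -/
def boundary : AffineChain V →ₗ[ZMod 2] AffineChain V :=
  Finsupp.linearCombination (ZMod 2) simplexBoundary

@[simp]
lemma boundary_simplex_nil : boundary (simplex ([] : List V)) = 0 := by
  simp [boundary, simplexBoundary]

@[simp]
lemma boundary_simplex_cons (v : V) (l : List V) :
    boundary (simplex (v :: l)) = simplex l + cone v (boundary (simplex l)) := by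
  simp [boundary, simplexBoundary]

lemma boundary_cone (v : V) (c : AffineChain V) :
    boundary (cone v c) = c + cone v (boundary c) := by
  have : boundary ∘ₗ cone v = LinearMap.id + cone v ∘ₗ boundary := hom_ext fun l => by simp
  exact LinearMap.congr_fun this c

@[simp]
lemma boundary_boundary (c : AffineChain V) : boundary (boundary c) = 0 := by
  have : boundary ∘ₗ boundary = (0 : AffineChain V →ₗ[ZMod 2] AffineChain V) := by
    refine hom_ext fun l => ?_
    rw [LinearMap.comp_apply, LinearMap.zero_apply]
    induction l with
    | nil => simp
    | cons v l ih => simp [boundary_cone, ih, ZModModule.add_self]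
  exact LinearMap.congr_fun this c

lemma boundary_simplex_mem_supported_faces (l : List V) :
    boundary (simplex l) ∈
      Finsupp.supported (ZMod 2) (ZMod 2) {f | f.length + 1 = l.length ∧ f.Sublist l} := by
  induction l with
  | nil => simp
  | cons v l ih =>
    rw [boundary_simplex_cons]
    refine add_mem (Finsupp.single_mem_supported _ _ ⟨rfl, l.sublist_cons_self v⟩) ?_
    refine map_mem_of_mem_supported (fun f hf => ?_) ih
    rw [cone_simplex]
    exact Finsupp.single_mem_supported _ _ ⟨by simp [hf.1], hf.2.cons_cons v⟩

end Boundary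

section Module

variable {V : Type*} [AddCommGroup V] [Module ℝ V] {n : ℕ} {v : V} {l l' : List V} {W W' : Set V}
  {z z' c c' : AffineChain V}

/-- The affine simplex in `V` spanned by the points of `l`. -/
def hull (l : List V) : Set V := convexHull ℝ {x | x ∈ l}

@[simp]
lemma hull_nil : hull ([] : List V) = ∅ := by simp [hull]

lemma convex_hull (l : List V) : Convex ℝ (hull l) := convex_convexHull ℝ _

lemma mem_hull {x : V} (h : x ∈ l) : x ∈ hull l := subset_convexHull ℝ _ h

lemma hull_mono (h : l ⊆ l') : hull l ⊆ hull l' := convexHull_mono h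

lemma hull_subset {S : Set V} (hS : Convex ℝ S) (h : ∀ x ∈ l, x ∈ S) : hull l ⊆ S :=
  convexHull_min h hS

lemma hull_cons_subset (hv : v ∈ W) (hW : StarConvex ℝ v W) (h : hull l ⊆ W) :
    hull (v :: l) ⊆ W := by
  rcases l with _ | ⟨a, l⟩
  · simpa [hull] using hv
  · have : {x | x ∈ v :: a :: l} = insert v {x | x ∈ a :: l} := by ext; simp
    rw [hull, this, convexHull_insert ⟨a, by simp⟩, convexJoin_singleton_left]
    exact iUnion₂_subset fun y hy => starConvex_iff_segment_subset.1 hW (h hy)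

/-- The chains of simplices with `n` vertices contained in `W`. -/
def chains (n : ℕ) (W : Set V) : Submodule (ZMod 2) (AffineChain V) :=
  Finsupp.supported (ZMod 2) (ZMod 2) {l | l.length = n ∧ hull l ⊆ W}

lemma simplex_mem_chains (hl : l.length = n) (hW : hull l ⊆ W) : simplex l ∈ chains n W :=
  Finsupp.single_mem_supported _ _ ⟨hl, hW⟩

lemma chains_mono (h : W ⊆ W') : chains n W ≤ chains n W' :=
  Finsupp.supported_mono fun _ hl => ⟨hl.1, hl.2.trans h⟩

lemma mem_chains_inter (h : z ∈ chains n W) (h' : z ∈ chains n W') : z ∈ chains n (W ∩ W') :=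
  fun _ hl => ⟨(h hl).1, subset_inter (h hl).2 (h' hl).2⟩

lemma eq_zero_or_eq_simplex_nil (hz : z ∈ chains 0 W) : z = 0 ∨ z = simplex [] := by
  have : z = Finsupp.single [] (z []) := by
    refine Finsupp.eq_single_iff.2 ⟨fun l hl => ?_, rfl⟩
    simpa using (hz hl).1
  rcases (by decide : ∀ a : ZMod 2, a = 0 ∨ a = 1) (z []) with h | h
  · left; rw [this, h, Finsupp.single_zero]
  · right; rw [this, h]

lemma chains_succ_empty : chains (n + 1) (∅ : Set V) = ⊥ := by
  rw [chains, ← Finsupp.supported_empty]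
  congr 1
  refine eq_empty_of_forall_notMem ?_
  rintro (_ | ⟨x, l⟩) hl
  · simpa using hl.1
  · exact hl.2 (mem_hull List.mem_cons_self)

lemma cone_mem_chains (hv : v ∈ W) (hW : StarConvex ℝ v W) (hz : z ∈ chains n W) :
    cone v z ∈ chains (n + 1) W := by
  refine map_mem_of_mem_supported (fun l hl => ?_) hz
  rw [cone_simplex]
  exact simplex_mem_chains (by simp [hl.1]) (hull_cons_subset hv hW hl.2)

lemma boundary_mem_chains (hz : z ∈ chains (n + 1) W) : boundary z ∈ chains n W := by
  refine map_mem_of_mem_supported (fun l hl f hf => ?_) hz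
  obtain ⟨hlen, hsub⟩ := boundary_simplex_mem_supported_faces l hf
  exact ⟨by have := hl.1; omega, (hull_mono hsub.subset).trans hl.2⟩

/-- The chains in `W` of degree `n` with zero boundary. -/
def cycles (n : ℕ) (W : Set V) : Submodule (ZMod 2) (AffineChain V) :=
  chains n W ⊓ LinearMap.ker boundary

/-- The chains of degree `n` that bound in `W`. -/
def boundaries (n : ℕ) (W : Set V) : Submodule (ZMod 2) (AffineChain V) :=
  (chains (n + 1) W).map boundary

lemma cycles_mono (h : W ⊆ W') : cycles n W ≤ cycles n W' :=
  inf_le_inf_right _ (chains_mono h)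

lemma boundaries_mono (h : W ⊆ W') : boundaries n W ≤ boundaries n W' :=
  Submodule.map_mono (chains_mono h)

lemma boundary_mem_boundaries (hc : c ∈ chains (n + 1) W) : boundary c ∈ boundaries n W :=
  Submodule.mem_map_of_mem hc

lemma add_mem_cycles (hc : c ∈ chains (n + 1) W) (hc' : c' ∈ chains (n + 1) W)
    (h : boundary c = boundary c') : c + c' ∈ cycles (n + 1) W :=
  ⟨add_mem hc hc', LinearMap.mem_ker.2 (by rw [map_add, h, ZModModule.add_self])⟩

/-- The reduced homology mod 2 of `W` vanishes. -/
def IsAcyclic (W : Set V) : Prop := ∀ n, cycles n W ≤ boundaries n W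

/-- At most one reduced homology class mod 2 in degree `n` of `W'` other than zero comes
from `W`. -/
def HasAtMostOneClass (n : ℕ) (W W' : Set V) : Prop :=
  ∀ z ∈ cycles n W, ∀ z' ∈ cycles n W,
    z ∈ boundaries n W' ∨ z' ∈ boundaries n W' ∨ z + z' ∈ boundaries n W'

/-- Some reduced homology class mod 2 of `W` in degree `n` does not vanish in `W'`. -/
def HasPersistentClass (n : ℕ) (W W' : Set V) : Prop :=
  ∃ z ∈ cycles n W, z ∉ boundaries n W'

lemma HasAtMostOneClass.mono {W₀ W₀' : Set V} (h : HasAtMostOneClass n W W') (h₀ : W₀ ⊆ W)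
    (h' : W' ⊆ W₀') : HasAtMostOneClass n W₀ W₀' := by
  have hmono := boundaries_mono (n := n) h'
  intro z hz z' hz'
  exact (h z (cycles_mono h₀ hz) z' (cycles_mono h₀ hz')).imp (@hmono _)
    (.imp (@hmono _) (@hmono _))

lemma HasPersistentClass.mono {W₀ W₀' : Set V} (h : HasPersistentClass n W W') (h₀ : W ⊆ W₀)
    (h' : W₀' ⊆ W') : HasPersistentClass n W₀ W₀' := by
  obtain ⟨z, hz, hz'⟩ := h
  exact ⟨z, cycles_mono h₀ hz, fun hB => hz' (boundaries_mono h' hB)⟩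

lemma IsAcyclic.of_starConvex (hv : v ∈ W) (hW : StarConvex ℝ v W) : IsAcyclic W :=
  fun _ z hz => ⟨cone v z, cone_mem_chains hv hW hz.1, by
    rw [boundary_cone, LinearMap.mem_ker.1 hz.2, map_zero, add_zero]⟩

lemma hasAtMostOneClass_empty : HasAtMostOneClass 0 (∅ : Set V) ∅ := by
  intro z hz z' hz'
  rcases eq_zero_or_eq_simplex_nil hz.1 with rfl | rfl
  · exact .inl (zero_mem _)
  rcases eq_zero_or_eq_simplex_nil hz'.1 with rfl | rfl
  · exact .inr (.inl (zero_mem _))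
  · exact .inr (.inr (by rw [ZModModule.add_self]; exact zero_mem _))

lemma hasPersistentClass_empty : HasPersistentClass 0 (∅ : Set V) ∅ := by
  refine ⟨simplex [], ⟨simplex_mem_chains rfl (by simp), by simp⟩, fun h => ?_⟩
  rw [boundaries, chains_succ_empty, Submodule.map_bot, Submodule.mem_bot] at h
  exact one_ne_zero (Finsupp.single_eq_zero.1 h)

end Module

lemma isCompact_hull {V : Type*} [AddCommGroup V] [Module ℝ V] [TopologicalSpace V]
    [IsTopologicalAddGroup V] [ContinuousSMul ℝ V] (l : List V) : IsCompact (hull l) :=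
  (List.finite_toSet l).isCompact_convexHull ℝ

lemma exists_mem_chains_of_directed {V ι : Type*} [AddCommGroup V] [Module ℝ V]
    [TopologicalSpace V] [IsTopologicalAddGroup V] [ContinuousSMul ℝ V] [Nonempty ι] {n : ℕ}
    {U : ι → Set V} (hU : ∀ i, IsOpen (U i)) (hdir : Directed (· ⊆ ·) U) {z : AffineChain V}
    (hz : z ∈ chains n (⋃ i, U i)) : ∃ i, z ∈ chains n (U i) := by
  obtain ⟨i, hi⟩ := z.support.finite_toSet.isCompact_biUnion
    (fun l _ => isCompact_hull l) |>.elim_directed_cover U hU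
    (iUnion₂_subset fun l hl => (hz hl).2) hdir
  exact ⟨i, fun l hl => ⟨(hz hl).1, (subset_biUnion_of_mem hl).trans hi⟩⟩

/-! ### Barycentric subdivision -/

section Subdivision

variable {V : Type*} [AddCommGroup V] [Module ℝ V] {n : ℕ} {l : List V} {W : Set V}
  {z : AffineChain V}

/-- The barycenter of the vertices of a simplex. -/
def barycenter (l : List V) : V := (l.length : ℝ)⁻¹ • l.sum

lemma barycenter_eq_sum (l : List V) :
    barycenter l = ∑ i : Fin l.length, (l.length : ℝ)⁻¹ • l[i] := by
  simp [barycenter, ← Finset.smul_sum]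

lemma barycenter_mem_hull (hl : l ≠ []) : barycenter l ∈ hull l := by
  have hpos : (0 : ℝ) < l.length := by exact_mod_cast List.length_pos_iff.2 hl
  rw [barycenter_eq_sum]
  exact (convex_hull l).sum_mem (fun _ _ => by positivity) (by simp [hpos.ne'])
    fun i _ => mem_hull (List.getElem_mem i.2)

/-- Barycentric subdivision of chains of degree `n`: a simplex is replaced by the cone, from its
barycenter, over its subdivided boundary. -/
def subdivision : ℕ → AffineChain V →ₗ[ZMod 2] AffineChain V
  | 0 => LinearMap.id
  | n + 1 => Finsupp.linearCombination (ZMod 2) fun l =>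
      cone (barycenter l) (subdivision n (boundary (simplex l)))

/-- The standard chain homotopy between the identity and `subdivision`. -/
def subdivisionHomotopy : ℕ → AffineChain V →ₗ[ZMod 2] AffineChain V
  | 0 => 0
  | n + 1 => Finsupp.linearCombination (ZMod 2) fun l =>
      cone (barycenter l) (simplex l + subdivisionHomotopy n (boundary (simplex l)))

lemma subdivision_zero : subdivision 0 = (LinearMap.id : AffineChain V →ₗ[ZMod 2] _) := rfl

lemma subdivisionHomotopy_zero : subdivisionHomotopy 0 = (0 : AffineChain V →ₗ[ZMod 2] _) := rfl

lemma subdivision_succ_simplex (n : ℕ) (l : List V) : subdivision (n + 1) (simplex l) =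
    cone (barycenter l) (subdivision n (boundary (simplex l))) := by
  simp [subdivision]

lemma subdivisionHomotopy_succ_simplex (n : ℕ) (l : List V) :
    subdivisionHomotopy (n + 1) (simplex l) =
      cone (barycenter l) (simplex l + subdivisionHomotopy n (boundary (simplex l))) := by
  simp [subdivisionHomotopy]

lemma boundary_subdivision (n : ℕ) (z : AffineChain V) :
    boundary (subdivision (n + 1) z) = subdivision n (boundary z) := by
  suffices boundary ∘ₗ subdivision (n + 1) = subdivision n ∘ₗ boundary (V := V) from
    LinearMap.congr_fun this z
  induction n with
  | zero =>
    refine hom_ext fun l => ?_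
    rw [LinearMap.comp_apply, LinearMap.comp_apply, subdivision_succ_simplex, boundary_cone,
      subdivision_zero, LinearMap.id_apply, boundary_boundary, map_zero, add_zero]
  | succ n ih =>
    refine hom_ext fun l => ?_
    have hcycle := LinearMap.congr_fun ih (boundary (simplex l))
    rw [LinearMap.comp_apply, LinearMap.comp_apply, boundary_boundary, map_zero] at hcycle
    rw [LinearMap.comp_apply, LinearMap.comp_apply, subdivision_succ_simplex, boundary_cone,
      hcycle, map_zero, add_zero]

lemma boundary_subdivisionHomotopy (n : ℕ) (z : AffineChain V) :
    boundary (subdivisionHomotopy (n + 1) z) =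
      z + subdivision (n + 1) z + subdivisionHomotopy n (boundary z) := by
  suffices boundary (V := V) ∘ₗ subdivisionHomotopy (n + 1) = LinearMap.id + subdivision (n + 1) +
      subdivisionHomotopy n ∘ₗ boundary from LinearMap.congr_fun this z
  induction n with
  | zero =>
    refine hom_ext fun l => ?_
    rw [LinearMap.add_apply, LinearMap.add_apply, LinearMap.comp_apply, LinearMap.comp_apply,
      LinearMap.id_apply, subdivisionHomotopy_succ_simplex, subdivision_succ_simplex,
      boundary_cone, subdivision_zero, subdivisionHomotopy_zero, LinearMap.zero_apply,
      LinearMap.id_apply, add_zero, add_zero]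
  | succ n ih =>
    refine hom_ext fun l => ?_
    have hcycle := LinearMap.congr_fun ih (boundary (simplex l))
    rw [LinearMap.add_apply, LinearMap.add_apply, LinearMap.comp_apply, LinearMap.comp_apply,
      LinearMap.id_apply, boundary_boundary, map_zero, add_zero] at hcycle
    rw [LinearMap.add_apply, LinearMap.add_apply, LinearMap.comp_apply, LinearMap.comp_apply,
      LinearMap.id_apply, subdivisionHomotopy_succ_simplex, subdivision_succ_simplex,
      boundary_cone, map_add, hcycle, ← add_assoc (boundary _), ZModModule.add_self, zero_add,
      add_right_comm]

lemma boundary_subdivision_pow (m n : ℕ) (z : AffineChain V) :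
    boundary ((subdivision (n + 1) ^ m) z) = (subdivision n ^ m) (boundary z) := by
  induction m with
  | zero => rfl
  | succ m ih =>
    rw [pow_succ', pow_succ', Module.End.mul_apply, Module.End.mul_apply, boundary_subdivision, ih]

lemma subdivision_mem_chains (hz : z ∈ chains n W) : subdivision n z ∈ chains n W := by
  induction n generalizing W z with
  | zero => exact hz
  | succ n ih =>
    refine map_mem_of_mem_supported (fun l hl => ?_) hz
    have hb : barycenter l ∈ hull l := barycenter_mem_hull (by rintro rfl; simp at hl)
    rw [subdivision_succ_simplex]
    refine chains_mono hl.2 (cone_mem_chains hb ((convex_hull l).starConvex hb) ?_)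
    exact ih (boundary_mem_chains (simplex_mem_chains hl.1 Subset.rfl))

lemma subdivisionHomotopy_mem_chains (hz : z ∈ chains n W) :
    subdivisionHomotopy n z ∈ chains (n + 1) W := by
  induction n generalizing W z with
  | zero => exact zero_mem _
  | succ n ih =>
    refine map_mem_of_mem_supported (fun l hl => ?_) hz
    have hb : barycenter l ∈ hull l := barycenter_mem_hull (by rintro rfl; simp at hl)
    have hl' : simplex l ∈ chains (n + 1) (hull l) := simplex_mem_chains hl.1 Subset.rfl
    rw [subdivisionHomotopy_succ_simplex]
    refine chains_mono hl.2 (cone_mem_chains hb ((convex_hull l).starConvex hb) ?_)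
    exact add_mem hl' (ih (boundary_mem_chains hl'))

lemma subdivision_pow_mem_chains (m : ℕ) (hz : z ∈ chains n W) :
    (subdivision n ^ m) z ∈ chains n W := by
  induction m with
  | zero => exact hz
  | succ m ih => rw [pow_succ']; exact subdivision_mem_chains ih

lemma add_subdivision_mem_boundaries (hz : z ∈ cycles n W) :
    z + subdivision n z ∈ boundaries n W := by
  cases n with
  | zero => simp [subdivision_zero, ZModModule.add_self]
  | succ n =>
    refine ⟨_, subdivisionHomotopy_mem_chains hz.1, ?_⟩
    rw [boundary_subdivisionHomotopy, LinearMap.mem_ker.1 hz.2, map_zero, add_zero]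

lemma subdivision_mem_cycles (hz : z ∈ cycles n W) : subdivision n z ∈ cycles n W := by
  refine ⟨subdivision_mem_chains hz.1, ?_⟩
  cases n with
  | zero => exact hz.2
  | succ n =>
    exact LinearMap.mem_ker.2 (by rw [boundary_subdivision, LinearMap.mem_ker.1 hz.2, map_zero])

lemma add_subdivision_pow_mem_boundaries (m : ℕ) (hz : z ∈ cycles n W) :
    z + (subdivision n ^ m) z ∈ boundaries n W := by
  have hpow (k : ℕ) : (subdivision n ^ k) z ∈ cycles n W := by
    induction k with
    | zero => exact hz
    | succ k ih => rw [pow_succ']; exact subdivision_mem_cycles ih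
  induction m with
  | zero => simp [ZModModule.add_self]
  | succ m ih =>
    rw [← ZModModule.add_add_add_cancel z ((subdivision n ^ m) z), pow_succ']
    exact add_mem ih (add_subdivision_mem_boundaries (hpow m))

end Subdivision

section Small

variable {V : Type*} [NormedAddCommGroup V] [NormedSpace ℝ V] {n : ℕ} {δ : ℝ} {l : List V}
  {W W₁ W₂ : Set V} {z : AffineChain V}

lemma dist_barycenter_le {x : V} (hl : l.length = n + 1) (hx : x ∈ l)
    (h : ∀ y ∈ l, dist y x ≤ δ) : dist (barycenter l) x ≤ n / (n + 1) * δ := by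
  obtain ⟨i, rfl⟩ := List.get_of_mem hx
  have hsub : barycenter l - l.get i =
      ∑ j ∈ Finset.univ.erase i, (l.length : ℝ)⁻¹ • (l.get j - l.get i) := by
    have hpos : (l.length : ℝ) ≠ 0 := by rw [hl]; positivity
    rw [Finset.sum_erase _ (by simp), barycenter_eq_sum]
    simp [smul_sub, ← Nat.cast_smul_eq_nsmul ℝ, hpos]
  calc dist (barycenter l) (l.get i)
      ≤ (Finset.univ.erase i).card • ((l.length : ℝ)⁻¹ * δ) := by
        rw [dist_eq_norm, hsub]
        refine norm_sum_le_of_le _ (fun j _ => ?_) |>.trans (Finset.sum_const _).le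
        rw [norm_smul, Real.norm_of_nonneg (by positivity), ← dist_eq_norm]
        exact mul_le_mul_of_nonneg_left (h _ (List.get_mem l j)) (by positivity)
    _ = n / (n + 1) * δ := by
        rw [Finset.card_erase_of_mem (Finset.mem_univ i), Finset.card_fin, hl]
        simp [div_eq_mul_inv, mul_assoc]

/-- The chains of degree `n` of simplices contained in `W` and of diameter at most `δ`. -/
def smallChains (n : ℕ) (W : Set V) (δ : ℝ) : Submodule (ZMod 2) (AffineChain V) :=
  Finsupp.supported (ZMod 2) (ZMod 2)
    {l | l.length = n ∧ hull l ⊆ W ∧ ∀ x ∈ l, ∀ y ∈ l, dist x y ≤ δ}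

lemma smallChains_mono {W' : Set V} {δ' : ℝ} (hW : W ⊆ W') (hδ : δ ≤ δ') :
    smallChains n W δ ≤ smallChains n W' δ' :=
  Finsupp.supported_mono fun _ hl =>
    ⟨hl.1, hl.2.1.trans hW, fun x hx y hy => (hl.2.2 x hx y hy).trans hδ⟩

lemma boundary_mem_smallChains (hz : z ∈ smallChains (n + 1) W δ) :
    boundary z ∈ smallChains n W δ := by
  refine map_mem_of_mem_supported (fun l hl f hf => ?_) hz
  obtain ⟨hlen, hsub⟩ := boundary_simplex_mem_supported_faces l hf
  exact ⟨by have := hl.1; omega, (hull_mono hsub.subset).trans hl.2.1,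
    fun x hx y hy => hl.2.2 x (hsub.subset hx) y (hsub.subset hy)⟩

lemma cone_mem_smallChains {v : V} (hv : v ∈ W) (hW : StarConvex ℝ v W) (hδ : 0 ≤ δ)
    (hvδ : ∀ x ∈ W, dist v x ≤ δ) (hz : z ∈ smallChains n W δ) :
    cone v z ∈ smallChains (n + 1) W δ := by
  refine map_mem_of_mem_supported (fun l hl => ?_) hz
  rw [cone_simplex]
  refine Finsupp.single_mem_supported _ _
    ⟨by simp [hl.1], hull_cons_subset hv hW hl.2.1, fun x hx y hy => ?_⟩
  have hl' (x) (hx : x ∈ l) : x ∈ W := hl.2.1 (mem_hull hx)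
  rcases List.mem_cons.1 hx with rfl | hxl <;> rcases List.mem_cons.1 hy with rfl | hyl
  · rwa [dist_self]
  · exact hvδ y (hl' y hyl)
  · rw [dist_comm]; exact hvδ x (hl' x hxl)
  · exact hl.2.2 x hxl y hyl

lemma subdivision_mem_smallChains (hδ : 0 ≤ δ) (hz : z ∈ smallChains n W δ) :
    subdivision n z ∈ smallChains n W (n / (n + 1) * δ) := by
  induction n generalizing W z with
  | zero =>
    refine map_mem_of_mem_supported (fun l hl => ?_) hz
    obtain rfl := List.length_eq_zero_iff.1 hl.1
    exact Finsupp.single_mem_supported _ _ ⟨rfl, hl.2.1, by simp⟩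
  | succ n ih =>
    refine map_mem_of_mem_supported (fun l hl => ?_) hz
    have hb : barycenter l ∈ hull l := barycenter_mem_hull (by rintro rfl; simp at hl)
    have hle : (n : ℝ) / (n + 1) * δ ≤ (n + 1 : ℕ) / ((n + 1 : ℕ) + 1) * δ := by
      refine mul_le_mul_of_nonneg_right ?_ hδ
      rw [div_le_div_iff₀ (by positivity) (by positivity)]
      push_cast
      linarith
    have hball : hull l ⊆ Metric.closedBall (barycenter l) (n / (n + 1) * δ) :=
      hull_subset (convex_closedBall _ _) fun x hx => by
        rw [Metric.mem_closedBall']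
        exact dist_barycenter_le hl.1 hx fun y hy => hl.2.2 y hy x hx
    rw [subdivision_succ_simplex]
    refine smallChains_mono hl.2.1 le_rfl (cone_mem_smallChains hb ((convex_hull l).starConvex hb)
      (by positivity) (fun x hx => (Metric.mem_closedBall'.1 (hball hx)).trans hle) ?_)
    refine smallChains_mono Subset.rfl hle (ih (boundary_mem_smallChains ?_))
    exact Finsupp.single_mem_supported _ _ ⟨hl.1, Subset.rfl, hl.2.2⟩

lemma subdivision_pow_mem_smallChains (hδ : 0 ≤ δ) (m : ℕ) (hz : z ∈ smallChains n W δ) :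
    (subdivision n ^ m) z ∈ smallChains n W ((n / (n + 1) : ℝ) ^ m * δ) := by
  induction m with
  | zero => simpa using hz
  | succ m ih =>
    rw [pow_succ', pow_succ', mul_assoc, Module.End.mul_apply]
    exact subdivision_mem_smallChains (by positivity) ih

lemma exists_subdivision_pow_mem_sup (h₁ : IsOpen W₁) (h₂ : IsOpen W₂)
    (hz : z ∈ chains n (W₁ ∪ W₂)) : ∃ m, (subdivision n ^ m) z ∈ chains n W₁ ⊔ chains n W₂ := by
  set K : Set V := ⋃ l ∈ z.support, hull l
  have hK : IsCompact K := z.support.finite_toSet.isCompact_biUnion fun l _ => isCompact_hull l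
  have hzK : z ∈ smallChains n K (Metric.diam K) := fun l hl =>
    have hlK : hull l ⊆ K := subset_biUnion_of_mem (u := hull) hl
    ⟨(hz hl).1, hlK, fun x hx y hy =>
      Metric.dist_le_diam_of_mem hK.isBounded (hlK (mem_hull hx)) (hlK (mem_hull hy))⟩
  obtain ⟨ε, hε, hlebesgue⟩ := lebesgue_number_lemma_of_metric_sUnion hK (c := {W₁, W₂})
    (by simp [h₁, h₂]) (by rw [sUnion_pair]; exact iUnion₂_subset fun l hl => (hz hl).2)
  have hlim : Filter.Tendsto (fun m : ℕ => (n / (n + 1) : ℝ) ^ m * Metric.diam K)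
      Filter.atTop (nhds (0 * Metric.diam K)) :=
    (tendsto_pow_atTop_nhds_zero_of_lt_one (by positivity)
      ((div_lt_one (by positivity)).2 (by linarith))).mul_const _
  rw [zero_mul] at hlim
  obtain ⟨m, hm⟩ := (hlim.eventually (gt_mem_nhds hε)).exists
  refine ⟨m, map_mem_of_mem_supported (f := LinearMap.id) (fun l hl => ?_)
    (subdivision_pow_mem_smallChains Metric.diam_nonneg m hzK)⟩
  rw [LinearMap.id_apply]
  rcases l with _ | ⟨x, l⟩
  · exact Submodule.mem_sup_left (simplex_mem_chains hl.1 (by simp))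
  · obtain ⟨W, hW, hxW⟩ := hlebesgue x (hl.2.1 (mem_hull List.mem_cons_self))
    have hlW : hull (x :: l) ⊆ W := Subset.trans (hull_subset (convex_ball x ε) fun y hy =>
      (hl.2.2 y hy x List.mem_cons_self).trans_lt hm) hxW
    rcases hW with rfl | rfl
    · exact Submodule.mem_sup_left (simplex_mem_chains hl.1 hlW)
    · exact Submodule.mem_sup_right (simplex_mem_chains hl.1 hlW)

end Small

/-! ### The Mayer–Vietoris sequence -/

section MayerVietoris

variable {V : Type*} [NormedAddCommGroup V] [NormedSpace ℝ V] {n : ℕ} {W₁ W₂ W₁' W₂' : Set V}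
  {s c₁ c₂ : AffineChain V}

lemma boundary_mem_boundaries_inter (h₁ : IsOpen W₁) (h₂ : IsOpen W₂)
    (hc₁ : c₁ ∈ chains (n + 1) W₁) (hc₂ : c₂ ∈ chains (n + 1) W₂) (h : boundary c₁ = boundary c₂)
    (hc : c₁ + c₂ ∈ boundaries (n + 1) (W₁ ∪ W₂)) : boundary c₁ ∈ boundaries n (W₁ ∩ W₂) := by
  obtain ⟨e, he, hbe⟩ := hc
  obtain ⟨m, hm⟩ := exists_subdivision_pow_mem_sup h₁ h₂ he
  obtain ⟨e₁, he₁, e₂, he₂, hsum⟩ := Submodule.mem_sup.1 hm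
  set S := subdivision (V := V) (n + 1) ^ m
  have hy : S c₁ + boundary e₁ = S c₂ + boundary e₂ := by
    have : boundary e₁ + boundary e₂ = S c₁ + S c₂ := by
      rw [← map_add, hsum, boundary_subdivision_pow, hbe, map_add]
    refine eq_of_add_eq_zero ?_
    rw [add_add_add_comm, this, ZModModule.add_self]
  have hmem : S c₁ + boundary e₁ ∈ chains (n + 1) (W₁ ∩ W₂) := by
    refine mem_chains_inter
      (add_mem (subdivision_pow_mem_chains m hc₁) (boundary_mem_chains he₁)) ?_
    rw [hy]
    exact add_mem (subdivision_pow_mem_chains m hc₂) (boundary_mem_chains he₂)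
  have hcycle : boundary c₁ ∈ cycles n (W₁ ∩ W₂) :=
    ⟨mem_chains_inter (boundary_mem_chains hc₁) (h ▸ boundary_mem_chains hc₂),
      boundary_boundary c₁⟩
  have := add_mem (add_subdivision_pow_mem_boundaries m hcycle) (boundary_mem_boundaries hmem)
  rwa [map_add, boundary_boundary, add_zero, boundary_subdivision_pow, add_assoc,
    ZModModule.add_self, add_zero] at this

lemma exists_add_of_mem_cycles_union (h₁ : IsOpen W₁) (h₂ : IsOpen W₂)
    (hs : s ∈ cycles n (W₁ ∪ W₂)) :
    ∃ s₁ ∈ chains n W₁, ∃ s₂ ∈ chains n W₂, ∃ r ∈ boundaries n (W₁ ∪ W₂), s = s₁ + s₂ + r := by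
  obtain ⟨m, hm⟩ := exists_subdivision_pow_mem_sup h₁ h₂ hs.1
  obtain ⟨s₁, hs₁, s₂, hs₂, hsum⟩ := Submodule.mem_sup.1 hm
  refine ⟨s₁, hs₁, s₂, hs₂, _, add_subdivision_pow_mem_boundaries m hs, ?_⟩
  rw [hsum, add_comm s, ← add_assoc, ZModModule.add_self, zero_add]

lemma exists_boundary_eq_of_mem_cycles_union (h₁ : IsOpen W₁) (h₂ : IsOpen W₂)
    (hs : s ∈ cycles (n + 1) (W₁ ∪ W₂)) :
    ∃ s₁ ∈ chains (n + 1) W₁, ∃ s₂ ∈ chains (n + 1) W₂, ∃ r ∈ boundaries (n + 1) (W₁ ∪ W₂),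
      boundary s₁ = boundary s₂ ∧ boundary s₁ ∈ cycles n (W₁ ∩ W₂) ∧ s = s₁ + s₂ + r := by
  obtain ⟨s₁, hs₁, s₂, hs₂, _, ⟨t, ht, rfl⟩, rfl⟩ := exists_add_of_mem_cycles_union h₁ h₂ hs
  have h : boundary s₁ = boundary s₂ := by
    have := LinearMap.mem_ker.1 hs.2
    rw [map_add, boundary_boundary, add_zero, map_add] at this
    exact eq_of_add_eq_zero this
  exact ⟨s₁, hs₁, s₂, hs₂, _, boundary_mem_boundaries ht, h,
    ⟨mem_chains_inter (boundary_mem_chains hs₁) (h ▸ boundary_mem_chains hs₂),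
      boundary_boundary s₁⟩, rfl⟩

lemma IsAcyclic.add_mem_boundaries_union (ha₁ : IsAcyclic W₁) (ha₂ : IsAcyclic W₂)
    (hc₁ : c₁ ∈ chains (n + 1) W₁) (hc₂ : c₂ ∈ chains (n + 1) W₂) (h : boundary c₁ = boundary c₂)
    (hc : boundary c₁ ∈ boundaries n (W₁ ∩ W₂)) : c₁ + c₂ ∈ boundaries (n + 1) (W₁ ∪ W₂) := by
  obtain ⟨b, hb, hbc⟩ := hc
  have hb₁ := ha₁ _ (add_mem_cycles hc₁ (chains_mono inter_subset_left hb) hbc.symm)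
  have hb₂ := ha₂ _ (add_mem_cycles hc₂ (chains_mono inter_subset_right hb) (h.symm.trans hbc.symm))
  have := add_mem (boundaries_mono subset_union_left hb₁) (boundaries_mono subset_union_right hb₂)
  rwa [add_add_add_comm, ZModModule.add_self, add_zero] at this

lemma IsAcyclic.exists_boundary_eq (ha₁ : IsAcyclic W₁) (ha₂ : IsAcyclic W₂)
    (hs : s ∈ cycles n (W₁ ∩ W₂)) :
    ∃ c₁ ∈ chains (n + 1) W₁, ∃ c₂ ∈ chains (n + 1) W₂, boundary c₁ = s ∧ boundary c₂ = s ∧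
      c₁ + c₂ ∈ cycles (n + 1) (W₁ ∪ W₂) := by
  obtain ⟨c₁, hc₁, hb₁⟩ := ha₁ n (cycles_mono inter_subset_left hs)
  obtain ⟨c₂, hc₂, hb₂⟩ := ha₂ n (cycles_mono inter_subset_right hs)
  exact ⟨c₁, hc₁, c₂, hc₂, hb₁, hb₂, add_mem_cycles (chains_mono subset_union_left hc₁)
    (chains_mono subset_union_right hc₂) (hb₁.trans hb₂.symm)⟩

lemma HasAtMostOneClass.union (h₁ : IsOpen W₁) (h₂ : IsOpen W₂) (ha₁' : IsAcyclic W₁')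
    (ha₂' : IsAcyclic W₂') (hW₁ : W₁ ⊆ W₁') (hW₂ : W₂ ⊆ W₂')
    (h : HasAtMostOneClass n (W₁ ∩ W₂) (W₁' ∩ W₂')) :
    HasAtMostOneClass (n + 1) (W₁ ∪ W₂) (W₁' ∪ W₂') := by
  intro z hz z' hz'
  obtain ⟨s₁, hs₁, s₂, hs₂, r, hr, hb, hs, rfl⟩ :=
    exists_boundary_eq_of_mem_cycles_union h₁ h₂ hz
  obtain ⟨s₁', hs₁', s₂', hs₂', r', hr', hb', hs', rfl⟩ :=
    exists_boundary_eq_of_mem_cycles_union h₁ h₂ hz'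
  replace hs₁ := chains_mono hW₁ hs₁
  replace hs₂ := chains_mono hW₂ hs₂
  replace hs₁' := chains_mono hW₁ hs₁'
  replace hs₂' := chains_mono hW₂ hs₂'
  replace hr := boundaries_mono (union_subset_union hW₁ hW₂) hr
  replace hr' := boundaries_mono (union_subset_union hW₁ hW₂) hr'
  rcases h _ hs _ hs' with hB | hB | hB
  · exact .inl (add_mem (ha₁'.add_mem_boundaries_union ha₂' hs₁ hs₂ hb hB) hr)
  · exact .inr (.inl (add_mem (ha₁'.add_mem_boundaries_union ha₂' hs₁' hs₂' hb' hB) hr'))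
  · have := add_mem (ha₁'.add_mem_boundaries_union ha₂' (add_mem hs₁ hs₁') (add_mem hs₂ hs₂')
      (by rw [map_add, map_add, hb, hb']) (by rwa [map_add])) (add_mem hr hr')
    rw [add_add_add_comm s₁, add_add_add_comm (s₁ + s₂)] at this
    exact .inr (.inr this)

lemma HasAtMostOneClass.inter (h₁' : IsOpen W₁') (h₂' : IsOpen W₂') (ha₁ : IsAcyclic W₁)
    (ha₂ : IsAcyclic W₂) (hW₁ : W₁ ⊆ W₁') (hW₂ : W₂ ⊆ W₂')
    (h : HasAtMostOneClass (n + 1) (W₁ ∪ W₂) (W₁' ∪ W₂')) :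
    HasAtMostOneClass n (W₁ ∩ W₂) (W₁' ∩ W₂') := by
  intro z hz z' hz'
  obtain ⟨c₁, hc₁, c₂, hc₂, rfl, hb, hc⟩ := ha₁.exists_boundary_eq ha₂ hz
  obtain ⟨c₁', hc₁', c₂', hc₂', rfl, hb', hc'⟩ := ha₁.exists_boundary_eq ha₂ hz'
  replace hc₁ := chains_mono hW₁ hc₁
  replace hc₂ := chains_mono hW₂ hc₂
  replace hc₁' := chains_mono hW₁ hc₁'
  replace hc₂' := chains_mono hW₂ hc₂'
  rcases h _ hc _ hc' with hB | hB | hB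
  · exact .inl (boundary_mem_boundaries_inter h₁' h₂' hc₁ hc₂ hb.symm hB)
  · exact .inr (.inl (boundary_mem_boundaries_inter h₁' h₂' hc₁' hc₂' hb'.symm hB))
  · rw [add_add_add_comm] at hB
    rw [← map_add]
    exact .inr (.inr (boundary_mem_boundaries_inter h₁' h₂' (add_mem hc₁ hc₁') (add_mem hc₂ hc₂')
      (by rw [map_add, map_add, hb, hb']) hB))

lemma HasPersistentClass.union (h₁' : IsOpen W₁') (h₂' : IsOpen W₂') (ha₁ : IsAcyclic W₁)
    (ha₂ : IsAcyclic W₂) (hW₁ : W₁ ⊆ W₁') (hW₂ : W₂ ⊆ W₂')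
    (h : HasPersistentClass n (W₁ ∩ W₂) (W₁' ∩ W₂')) :
    HasPersistentClass (n + 1) (W₁ ∪ W₂) (W₁' ∪ W₂') := by
  obtain ⟨z, hz, hz'⟩ := h
  obtain ⟨c₁, hc₁, c₂, hc₂, rfl, hb, hc⟩ := ha₁.exists_boundary_eq ha₂ hz
  exact ⟨_, hc, fun hB => hz' (boundary_mem_boundaries_inter h₁' h₂' (chains_mono hW₁ hc₁)
    (chains_mono hW₂ hc₂) hb.symm hB)⟩

lemma HasPersistentClass.inter (h₁ : IsOpen W₁) (h₂ : IsOpen W₂) (ha₁' : IsAcyclic W₁')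
    (ha₂' : IsAcyclic W₂') (hW₁ : W₁ ⊆ W₁') (hW₂ : W₂ ⊆ W₂')
    (h : HasPersistentClass (n + 1) (W₁ ∪ W₂) (W₁' ∪ W₂')) :
    HasPersistentClass n (W₁ ∩ W₂) (W₁' ∩ W₂') := by
  obtain ⟨z, hz, hz'⟩ := h
  obtain ⟨s₁, hs₁, s₂, hs₂, r, hr, hb, hs, rfl⟩ :=
    exists_boundary_eq_of_mem_cycles_union h₁ h₂ hz
  refine ⟨_, hs, fun hB => hz' (add_mem ?_ (boundaries_mono (union_subset_union hW₁ hW₂) hr))⟩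
  exact ha₁'.add_mem_boundaries_union ha₂' (chains_mono hW₁ hs₁) (chains_mono hW₂ hs₂) hb hB

end MayerVietoris

section Punctured

variable {V : Type*} [NormedAddCommGroup V] [NormedSpace ℝ V] {W : Set V} {v : V}

lemma isAcyclic_union_halfSpace {f : V →ₗ[ℝ] ℝ} (hv : f v < 0)
    (hW : ∀ y ∈ W, ∀ p q : ℝ, 0 < q → p • v + q • y ∈ W) : IsAcyclic (W ∪ {y | f y < 0}) := by
  refine IsAcyclic.of_starConvex (.inr hv) ?_
  rintro y hy p q hp hq hpq
  rcases hq.eq_or_lt with rfl | hq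
  · right
    obtain rfl : p = 1 := by linarith
    simpa using hv
  rcases hy with hy | hy
  · exact .inl (hW y hy p q hq)
  · right
    simp only [mem_ofPred_eq, map_add, map_smul, smul_eq_mul] at hy ⊢
    nlinarith

lemma hasOneClass_union_ne_zero {n : ℕ} (hWo : IsOpen W) {f : V →L[ℝ] ℝ} (hv : f v = 1)
    (hW : ∀ y ∈ W, ∀ p q : ℝ, 0 < q → p • v + q • y ∈ W)
    (h : HasAtMostOneClass n W W ∧ HasPersistentClass n W W) :
    HasAtMostOneClass (n + 1) (W ∪ {y | f y ≠ 0}) (W ∪ {y | f y ≠ 0}) ∧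
      HasPersistentClass (n + 1) (W ∪ {y | f y ≠ 0}) (W ∪ {y | f y ≠ 0}) := by
  have hneg : IsAcyclic (W ∪ {y | f y < 0}) :=
    isAcyclic_union_halfSpace (f := (f : V →ₗ[ℝ] ℝ)) (v := -v) (by simp [hv]) fun y hy p q hq => by
      simpa using hW y hy (-p) q hq
  have hpos : IsAcyclic (W ∪ {y | 0 < f y}) := by
    simpa using isAcyclic_union_halfSpace (f := -(f : V →ₗ[ℝ] ℝ)) (by simp [hv]) hW
  have hnego : IsOpen (W ∪ {y | f y < 0}) := hWo.union (isOpen_lt (by fun_prop) (by fun_prop))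
  have hposo : IsOpen (W ∪ {y | 0 < f y}) := hWo.union (isOpen_lt (by fun_prop) (by fun_prop))
  have hinter : (W ∪ {y | f y < 0}) ∩ (W ∪ {y | 0 < f y}) = W := by
    rw [← union_inter_distrib_left, union_eq_left]
    rintro y ⟨h₁, h₂⟩
    exact (lt_asymm (show f y < 0 from h₁) (show 0 < f y from h₂)).elim
  have hunion : (W ∪ {y | f y < 0}) ∪ (W ∪ {y | 0 < f y}) = W ∪ {y | f y ≠ 0} := by
    rw [← union_union_distrib_left, ← ofPred_or]
    simp only [ne_iff_lt_or_gt]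
  rw [← hunion]
  rw [← hinter] at h
  exact ⟨h.1.union hnego hposo hneg hpos Subset.rfl Subset.rfl,
    h.2.union hnego hposo hneg hpos Subset.rfl Subset.rfl⟩

lemma hasOneClass_of_biorthogonal {ι : Type*} {f : ι → V →L[ℝ] ℝ} {v : ι → V}
    (hf : ∀ i, f i (v i) = 1) (hf' : ∀ i j, i ≠ j → f i (v j) = 0) (s : Finset ι) :
    HasAtMostOneClass s.card {y | ∃ i ∈ s, f i y ≠ 0} {y | ∃ i ∈ s, f i y ≠ 0} ∧
      HasPersistentClass s.card {y | ∃ i ∈ s, f i y ≠ 0} {y | ∃ i ∈ s, f i y ≠ 0} := by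
  classical
  induction s using Finset.induction_on with
  | empty =>
    simpa using And.intro (hasAtMostOneClass_empty (V := V)) (hasPersistentClass_empty (V := V))
  | insert j s hj ih =>
    have hopen : IsOpen {y | ∃ i ∈ s, f i y ≠ 0} := by
      have : {y | ∃ i ∈ s, f i y ≠ 0} = ⋃ i ∈ s, {y | f i y ≠ 0} := by ext; simp
      rw [this]
      exact isOpen_biUnion fun i _ => isOpen_ne_fun (f i).continuous continuous_const
    have hunion : {y | ∃ i ∈ insert j s, f i y ≠ 0} =
        {y | ∃ i ∈ s, f i y ≠ 0} ∪ {y | f j y ≠ 0} := by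
      ext y
      simp [or_comm]
    rw [Finset.card_insert_of_notMem hj, hunion]
    refine hasOneClass_union_ne_zero hopen (hf j) ?_ ih
    rintro y ⟨i, hi, hy⟩ p q hq
    refine ⟨i, hi, ?_⟩
    rw [map_add, map_smul, map_smul, hf' i j (by rintro rfl; exact hj hi), smul_zero, zero_add]
    exact smul_ne_zero hq.ne' hy

lemma hasOneClass_compl_zero [FiniteDimensional ℝ V] :
    HasAtMostOneClass (Module.finrank ℝ V) ({0}ᶜ : Set V) {0}ᶜ ∧
      HasPersistentClass (Module.finrank ℝ V) ({0}ᶜ : Set V) {0}ᶜ := by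
  set b := Module.finBasis ℝ V
  have h := hasOneClass_of_biorthogonal
    (f := fun i => LinearMap.toContinuousLinearMap (b.coord i)) (v := b) (by simp)
    (fun i j hij => by simp [hij.symm]) Finset.univ
  rw [Finset.card_fin] at h
  have hcompl : ({0}ᶜ : Set V) =
      {y | ∃ i ∈ Finset.univ, LinearMap.toContinuousLinearMap (b.coord i) y ≠ 0} := by
    ext y
    simp [← b.forall_coord_eq_zero_iff]
  rwa [hcompl]

end Punctured

/-! ### Complements of cones -/

section Cone

variable {E : Type*} [AddCommGroup E] [Module ℝ E] {S S' : Set E} {x : E}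

/-- The open cone in `E × ℝ` with apex `0` over the copy `S × {1}` of `S`. -/
def openCone (S : Set E) : Set (E × ℝ) := {y | 0 < y.2 ∧ y.2⁻¹ • y.1 ∈ S}

/-- The complement of `openCone S` in the punctured space `E × ℝ`. Separation of `E` by `S` is
studied on this complement, where the homology in question sits in positive degrees. -/
def coneCompl (S : Set E) : Set (E × ℝ) := {0}ᶜ \ openCone S

lemma openCone_mono (h : S ⊆ S') : openCone S ⊆ openCone S' := fun _ hy => ⟨hy.1, h hy.2⟩

lemma convex_openCone (hS : Convex ℝ S) : Convex ℝ (openCone S) := by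
  rintro ⟨u, s⟩ ⟨hs, hu⟩ ⟨u', s'⟩ ⟨hs', hu'⟩ a b ha hb hab
  have hpos : 0 < a * s + b * s' := by
    rcases ha.eq_or_lt with rfl | ha
    · simpa [show b = 1 by linarith] using hs'
    · exact add_pos_of_pos_of_nonneg (mul_pos ha hs) (mul_nonneg hb (le_of_lt hs'))
  refine ⟨hpos, ?_⟩
  have := hS hu hu' (a := (a * s + b * s')⁻¹ * (a * s)) (b := (a * s + b * s')⁻¹ * (b * s'))
    (mul_nonneg (inv_nonneg.2 hpos.le) (mul_nonneg ha (le_of_lt hs)))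
    (mul_nonneg (inv_nonneg.2 hpos.le) (mul_nonneg hb (le_of_lt hs')))
    (by rw [← mul_add, inv_mul_cancel₀ hpos.ne'])
  simpa [smul_smul, mul_assoc, (show s ≠ 0 from ne_of_gt hs), (show s' ≠ 0 from ne_of_gt hs')]
    using this

lemma coneCompl_anti (h : S ⊆ S') : coneCompl S' ⊆ coneCompl S :=
  sdiff_subset_sdiff_right (openCone_mono h)

lemma coneCompl_empty : coneCompl (∅ : Set E) = {0}ᶜ := by
  ext y
  simp [coneCompl, openCone]

lemma coneCompl_union (S S' : Set E) : coneCompl (S ∪ S') = coneCompl S ∩ coneCompl S' := by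
  ext y
  simp only [coneCompl, openCone, mem_sdiff, mem_inter_iff, mem_union, mem_ofPred_eq]
  tauto

lemma coneCompl_iInter {ι : Sort*} [Nonempty ι] (S : ι → Set E) :
    coneCompl (⋂ i, S i) = ⋃ i, coneCompl (S i) := by
  ext y
  simp only [coneCompl, openCone, mem_sdiff, mem_iUnion, mem_iInter, mem_ofPred_eq]
  rw [exists_and_left, ← not_forall, forall_and_left]

lemma coneCompl_inter (S S' : Set E) : coneCompl (S ∩ S') = coneCompl S ∪ coneCompl S' := by
  rw [inter_eq_iInter, coneCompl_iInter, union_eq_iUnion]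
  congr! with b
  cases b <;> rfl

lemma coneCompl_sdiff (S S' : Set E) : coneCompl (S \ S') = openCone S' ∪ coneCompl S := by
  ext y
  have : 0 < y.2 → y ≠ 0 := by rintro h rfl; exact lt_irrefl _ h
  simp only [coneCompl, openCone, mem_sdiff, mem_union, mem_ofPred_eq, mem_compl_iff,
    mem_singleton_iff]
  tauto

lemma mem_coneCompl_singleton {y : E × ℝ} :
    y ∈ coneCompl {x} ↔ ∀ r : ℝ, 0 ≤ r → y ≠ r • (x, 1) := by
  refine ⟨?_, fun h => ⟨fun hy => h 0 le_rfl (by rw [zero_smul]; exact hy), fun hy => ?_⟩⟩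
  · rintro ⟨hy, hy'⟩ r hr rfl
    rcases hr.eq_or_lt with rfl | hr
    · exact hy (zero_smul ℝ _)
    · exact hy' ⟨by simpa using hr, by simp [smul_smul, hr.ne']⟩
  · refine h y.2 hy.1.le (Prod.ext ?_ (by simp))
    exact (inv_smul_eq_iff₀ hy.1.ne').1 hy.2

lemma isAcyclic_coneCompl_singleton (x : E) : IsAcyclic (coneCompl {x}) := by
  refine IsAcyclic.of_starConvex (v := -((x, 1) : E × ℝ)) (mem_coneCompl_singleton.2 ?_) ?_
  · intro r hr h
    have := congrArg Prod.snd h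
    simp only [Prod.snd_neg, Prod.smul_snd, smul_eq_mul] at this
    linarith
  · intro y hy p q hp hq hpq
    rw [mem_coneCompl_singleton] at hy ⊢
    intro r hr h
    have hqy : q • y = (p + r) • ((x, 1) : E × ℝ) := by
      rw [add_smul, ← h, smul_neg, add_neg_cancel_left]
    rcases hq.eq_or_lt with rfl | hq
    · have := congrArg Prod.snd hqy
      simp only [zero_smul, Prod.snd_zero, Prod.smul_snd, smul_eq_mul] at this
      linarith
    · refine hy (q⁻¹ * (p + r)) (by positivity) ?_
      rw [mul_smul, ← hqy, inv_smul_smul₀ hq.ne']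

end Cone

section Topology

variable {E : Type*} [NormedAddCommGroup E] [NormedSpace ℝ E]

lemma isOpen_openCone {U : Set E} (hU : IsOpen U) : IsOpen (openCone U) := by
  have : ContinuousOn (fun y : E × ℝ => y.2⁻¹ • y.1) {y | 0 < y.2} :=
    (continuous_snd.continuousOn.inv₀ fun y hy => ne_of_gt hy).smul continuous_fst.continuousOn
  exact this.isOpen_inter_preimage (isOpen_lt continuous_const continuous_snd) hU

lemma isOpen_coneCompl {K : Set E} (hK : IsCompact K) : IsOpen (coneCompl K) := by
  obtain ⟨R, hR⟩ := hK.isBounded.exists_norm_le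
  have hcone {y : E × ℝ} (hy : y ∈ openCone K) : ‖y.1‖ ≤ R * |y.2| := by
    have := hR _ hy.2
    rwa [norm_smul, norm_inv, Real.norm_eq_abs, inv_mul_le_iff₀ (abs_pos.2 hy.1.ne'), mul_comm]
      at this
  have : coneCompl K = {y | y.2 < 0} ∪ openCone Kᶜ ∪ {y | R * |y.2| < ‖y.1‖} := by
    ext y
    constructor
    · rintro ⟨hy, hyK⟩
      rcases lt_trichotomy y.2 0 with h | h | h
      · exact .inl (.inl h)
      · refine .inr ?_
        have : y.1 ≠ 0 := fun h' => hy (Prod.ext h' h)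
        simpa [h] using this
      · exact .inl (.inr ⟨h, fun h' => hyK ⟨h, h'⟩⟩)
    · rintro ((h | h) | h)
      · exact ⟨fun (h' : y = 0) => by simp [h'] at h, fun h' => lt_asymm h h'.1⟩
      · exact ⟨fun (h' : y = 0) => by simp [h', openCone] at h, fun h' => h.2 h'.2⟩
      · exact ⟨fun (h' : y = 0) => by simp [h'] at h, fun h' => (hcone h').not_gt h⟩
  rw [this]
  exact ((isOpen_lt continuous_snd continuous_const).union
    (isOpen_openCone hK.isClosed.isOpen_compl)).union (isOpen_lt (by fun_prop) (by fun_prop))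

variable {K K₁ K₂ : Set E} {n : ℕ} {z : AffineChain (E × ℝ)}

lemma mem_boundaries_coneCompl_union (h₁ : IsCompact K₁) (h₂ : IsCompact K₂)
    (ha : IsAcyclic (coneCompl (K₁ ∩ K₂))) (hz₁ : z ∈ boundaries n (coneCompl K₁))
    (hz₂ : z ∈ boundaries n (coneCompl K₂)) : z ∈ boundaries n (coneCompl (K₁ ∪ K₂)) := by
  obtain ⟨c₁, hc₁, rfl⟩ := hz₁
  obtain ⟨c₂, hc₂, hb⟩ := hz₂
  rw [coneCompl_union]
  refine boundary_mem_boundaries_inter (isOpen_coneCompl h₁) (isOpen_coneCompl h₂) hc₁ hc₂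
    hb.symm ?_
  rw [← coneCompl_inter]
  refine ha _ (add_mem_cycles ?_ ?_ hb.symm)
  · exact chains_mono (coneCompl_anti inter_subset_left) hc₁
  · exact chains_mono (coneCompl_anti inter_subset_right) hc₂

lemma exists_mem_boundaries_coneCompl_closedBall (hK : IsCompact K) {h : E → ℝ}
    (hh : ContinuousOn h K) {t : ℝ} (hz : z ∈ boundaries n (coneCompl (K ∩ h ⁻¹' {t}))) :
    ∃ ε > 0, z ∈ boundaries n (coneCompl (K ∩ h ⁻¹' Metric.closedBall t ε)) := by
  obtain ⟨c, hc, rfl⟩ := hz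
  have : Nonempty {ε : ℝ // 0 < ε} := ⟨1, one_pos⟩
  have hball : ({t} : Set ℝ) = ⋂ ε : {ε : ℝ // 0 < ε}, Metric.closedBall t ε := by
    refine Subset.antisymm (subset_iInter fun ε => by simpa using ε.2.le) fun s hs => ?_
    refine eq_of_forall_dist_le fun ε hε => ?_
    exact mem_iInter.1 hs ⟨ε, hε⟩
  rw [hball, preimage_iInter, inter_iInter, coneCompl_iInter] at hc
  obtain ⟨ε, hε⟩ := exists_mem_chains_of_directed
    (U := fun ε : {ε : ℝ // 0 < ε} => coneCompl (K ∩ h ⁻¹' Metric.closedBall t ε))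
    (fun ε => isOpen_coneCompl <| hK.of_isClosed_subset
      (hh.preimage_isClosed_of_isClosed hK.isClosed Metric.isClosed_closedBall) inter_subset_left)
    (directed_of_isDirected_ge fun ε ε' hle => coneCompl_anti (inter_subset_inter_right _
      (preimage_mono (Metric.closedBall_subset_closedBall hle)))) hc
  exact ⟨ε, ε.2, boundary_mem_boundaries hε⟩

theorem isAcyclic_coneCompl_of_levels (hK : IsCompact K) {h : E → ℝ} (hh : ContinuousOn h K)
    {a b : ℝ} (hab : a ≤ b) (hKab : MapsTo h K (Icc a b))
    (hac : ∀ t ∈ Icc a b, IsAcyclic (coneCompl (K ∩ h ⁻¹' {t}))) : IsAcyclic (coneCompl K) := by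
  intro n z hz
  have hcompact (p q : ℝ) : IsCompact (K ∩ h ⁻¹' Icc p q) := hK.of_isClosed_subset
    (hh.preimage_isClosed_of_isClosed hK.isClosed isClosed_Icc) inter_subset_left
  have hlevel (t) (ht : t ∈ Icc a b) : z ∈ boundaries n (coneCompl (K ∩ h ⁻¹' {t})) :=
    hac t ht n (cycles_mono (coneCompl_anti inter_subset_left) hz)
  have hglue {p q r : ℝ} (hpq : p ≤ q) (hqr : q ≤ r) (hq : q ∈ Icc a b)
      (h₁ : z ∈ boundaries n (coneCompl (K ∩ h ⁻¹' Icc p q)))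
      (h₂ : z ∈ boundaries n (coneCompl (K ∩ h ⁻¹' Icc q r))) :
      z ∈ boundaries n (coneCompl (K ∩ h ⁻¹' Icc p r)) := by
    rw [← Icc_union_Icc_eq_Icc hpq hqr, preimage_union, inter_union_distrib_left]
    refine mem_boundaries_coneCompl_union (hcompact p q) (hcompact q r) ?_ h₁ h₂
    rw [← inter_inter_distrib_left, ← preimage_inter, Icc_inter_Icc_eq_singleton hpq hqr]
    exact hac q hq
  choose! ε hε hball using fun t ht =>
    exists_mem_boundaries_coneCompl_closedBall hK hh (hlevel t ht)
  obtain ⟨t, ht₀, htmono, ⟨m, hm⟩, htcover⟩ := exists_monotone_Icc_subset_open_cover_Icc hab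
    (c := fun t : Icc a b => {x : Icc a b | (x : ℝ) ∈ Metric.ball (t : ℝ) (ε t)})
    (fun t => Metric.isOpen_ball.preimage continuous_subtype_val)
    (fun x _ => mem_iUnion.2 ⟨x, by simpa using hε x x.2⟩)
  have hinit (i : ℕ) : z ∈ boundaries n (coneCompl (K ∩ h ⁻¹' Icc a (t i))) := by
    induction i with
    | zero =>
      rw [ht₀, Icc_self]
      exact hlevel a ⟨le_rfl, hab⟩
    | succ i ih =>
      refine hglue (t i).2.1 (htmono i.le_succ) (t i).2 ih ?_
      obtain ⟨s, hs⟩ := htcover i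
      refine boundaries_mono (coneCompl_anti (inter_subset_inter_right _ (preimage_mono ?_)))
        (hball s s.2)
      exact fun x hx => Metric.ball_subset_closedBall
        (hs (a := ⟨x, (t i).2.1.trans hx.1, hx.2.trans (t _).2.2⟩) hx)
  have := hinit m
  rwa [hm m le_rfl, inter_eq_left.2 (show K ⊆ h ⁻¹' Icc a b from hKab)] at this

end Topology

end AffineChain

/-! ### Boxes and their embeddings -/

section OpenBox

variable {ι : Type*} {α β α' β' c : ι → ℝ}

/-- The open box with corners `α` and `β`. -/
def openBox (α β : ι → ℝ) : Set (ι → ℝ) := univ.pi fun i => Ioo (α i) (β i)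

lemma mem_openBox {x : ι → ℝ} : x ∈ openBox α β ↔ ∀ i, x i ∈ Ioo (α i) (β i) := mem_univ_pi

lemma isOpen_openBox [Finite ι] : IsOpen (openBox α β) :=
  isOpen_set_pi finite_univ fun _ _ => isOpen_Ioo

lemma openBox_subset_Icc : openBox α β ⊆ Icc α β := fun _ hx =>
  ⟨fun i => (mem_openBox.1 hx i).1.le, fun i => (mem_openBox.1 hx i).2.le⟩

lemma openBox_mono (hα : α' ≤ α) (hβ : β ≤ β') : openBox α β ⊆ openBox α' β' :=
  pi_mono fun i _ => Ioo_subset_Ioo (hα i) (hβ i)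

lemma exists_openBox_subset [Finite ι] (hc : c ∈ openBox α β) {U : Set (ι → ℝ)}
    (hU : U ∈ nhds c) :
    ∃ α' β', c ∈ openBox α' β' ∧ α ≤ α' ∧ β' ≤ β ∧ openBox α' β' ⊆ U := by
  cases nonempty_fintype ι
  obtain ⟨δ, hδ, hball⟩ := Metric.mem_nhds_iff.1 hU
  rw [mem_openBox] at hc
  refine ⟨fun i => max (α i) (c i - δ), fun i => min (β i) (c i + δ), mem_openBox.2 fun i => ?_,
    fun i => le_max_left _ _, fun i => min_le_left _ _, fun x hx => hball ?_⟩
  · exact ⟨max_lt (hc i).1 (by linarith), lt_min (hc i).2 (by linarith)⟩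
  · rw [Metric.mem_ball, dist_pi_lt_iff hδ]
    intro i
    obtain ⟨h₁, h₂⟩ := mem_openBox.1 hx i
    rw [Real.dist_eq, abs_lt]
    constructor
    · linarith [(le_max_right _ _).trans_lt h₁]
    · linarith [h₂.trans_le (min_le_right _ _)]

/-- The slice of the box `Icc lo hi` through `c` in the directions of the coordinates in `s`. -/
def boxSection (lo hi c : ι → ℝ) (s : Finset ι) : Set (ι → ℝ) :=
  {x ∈ Icc lo hi | ∀ i ∉ s, x i = c i}

variable {lo hi : ι → ℝ}

lemma boxSection_subset (s : Finset ι) : boxSection lo hi c s ⊆ Icc lo hi := sep_subset _ _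

lemma boxSection_empty (hc : c ∈ Icc lo hi) : boxSection lo hi c ∅ = {c} := by
  ext x
  refine ⟨fun hx => funext fun i => hx.2 i (by simp), ?_⟩
  rintro rfl
  exact ⟨hc, fun _ _ => rfl⟩

lemma boxSection_univ [Fintype ι] : boxSection lo hi c Finset.univ = Icc lo hi := by
  ext x
  simp [boxSection]

open Classical in
lemma boxSection_eq_Icc (hc : c ∈ Icc lo hi) (s : Finset ι) :
    boxSection lo hi c s = Icc (s.piecewise lo c) (s.piecewise hi c) := by
  ext x
  constructor
  · rintro ⟨hx, hxs⟩
    constructor <;> intro i <;> by_cases hi : i ∈ s <;> simp [hi, hx.1 i, hx.2 i, hxs]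
  · rintro ⟨hl, hu⟩
    refine ⟨⟨fun i => ?_, fun i => ?_⟩, fun i hi => ?_⟩
    · exact (s.le_piecewise_of_le_of_le le_rfl hc.1 i).trans (hl i)
    · exact (hu i).trans (s.piecewise_le_of_le_of_le le_rfl hc.2 i)
    · have hl := hl i
      have hu := hu i
      rw [s.piecewise_eq_of_notMem _ _ hi] at hl hu
      exact le_antisymm hu hl

open Classical in
lemma union_slabs_eq_boxSection_insert (s : Finset ι) (j : ι) :
    {x ∈ boxSection lo hi c (insert j s) | x j ∈ Icc (lo j) (c j)} ∪
      {x ∈ boxSection lo hi c (insert j s) | x j ∈ Icc (c j) (hi j)} =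
        boxSection lo hi c (insert j s) := by
  refine Subset.antisymm (union_subset (sep_subset _ _) (sep_subset _ _)) fun x hx => ?_
  exact (le_total (x j) (c j)).imp (fun h => ⟨hx, hx.1.1 j, h⟩) fun h => ⟨hx, h, hx.1.2 j⟩

open Classical in
lemma inter_slabs_eq_boxSection (hc : c ∈ Icc lo hi) {s : Finset ι} {j : ι} (hj : j ∉ s) :
    {x ∈ boxSection lo hi c (insert j s) | x j ∈ Icc (lo j) (c j)} ∩
      {x ∈ boxSection lo hi c (insert j s) | x j ∈ Icc (c j) (hi j)} =
        boxSection lo hi c s := by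
  ext x
  constructor
  · rintro ⟨⟨⟨hx, hxs⟩, -, hxj⟩, -, hxj', -⟩
    refine ⟨hx, fun i hi => ?_⟩
    rcases eq_or_ne i j with rfl | hij
    · exact le_antisymm hxj hxj'
    · exact hxs i (by simp [hij, hi])
  · rintro ⟨hx, hxs⟩
    have hxj := hxs j hj
    have hx' : x ∈ boxSection lo hi c (insert j s) :=
      ⟨hx, fun i hi => hxs i fun his => hi (Finset.mem_insert_of_mem his)⟩
    exact ⟨⟨hx', hxj ▸ hc.1 j, hxj.le⟩, hx', hxj.ge, hxj ▸ hc.2 j⟩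

end OpenBox

namespace AffineChain

variable {E : Type*} [NormedAddCommGroup E] [NormedSpace ℝ E]

section Image

variable {X : Type*} [TopologicalSpace X] {e : X → E} {B : Set X}

lemma isAcyclic_coneCompl_image_of_levels (hB : IsCompact B) (he : ContinuousOn e B)
    (hinj : InjOn e B) {h : X → ℝ} (hh : ContinuousOn h B) {a b : ℝ} (hab : a ≤ b)
    (hBab : MapsTo h B (Icc a b))
    (hac : ∀ t ∈ Icc a b, IsAcyclic (coneCompl (e '' (B ∩ h ⁻¹' {t})))) :
    IsAcyclic (coneCompl (e '' B)) := by
  rcases B.eq_empty_or_nonempty with rfl | ⟨x₀, -⟩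
  · simpa using hac a ⟨le_rfl, hab⟩
  have : Nonempty X := ⟨x₀⟩
  set g := Function.invFunOn e B
  have hg : ∀ x ∈ B, g (e x) = x := fun x hx => hinj.leftInvOn_invFunOn hx
  have hpre (s : Set ℝ) : e '' B ∩ (h ∘ g) ⁻¹' s = e '' (B ∩ h ⁻¹' s) := by
    ext y
    constructor
    · rintro ⟨⟨x, hx, rfl⟩, hs⟩
      exact ⟨x, ⟨hx, by simpa [hg x hx] using hs⟩, rfl⟩
    · rintro ⟨x, ⟨hx, hs⟩, rfl⟩
      exact ⟨mem_image_of_mem e hx, by simpa [hg x hx] using hs⟩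
  refine isAcyclic_coneCompl_of_levels (hB.image_of_continuousOn he) (h := h ∘ g) ?_ hab ?_ ?_
  · refine continuousOn_iff_isClosed.2 fun t ht => ⟨e '' (B ∩ h ⁻¹' t), ?_, ?_⟩
    · refine (IsCompact.image_of_continuousOn ?_ (he.mono inter_subset_left)).isClosed
      obtain ⟨u, hu, htu⟩ := continuousOn_iff_isClosed.1 hh t ht
      rw [inter_comm, htu]
      exact hB.inter_left hu
    · rw [inter_comm, hpre, eq_comm, inter_eq_left]
      exact image_mono inter_subset_left
  · rintro _ ⟨x, hx, rfl⟩
    simpa [hg x hx] using hBab hx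
  · intro t ht
    rw [hpre]
    exact hac t ht

end Image

section Box

variable {ι : Type*} {e : (ι → ℝ) → E} {B : Set (ι → ℝ)} {l u : ι → ℝ}

open Classical in
lemma isAcyclic_coneCompl_image_of_finset (s : Finset ι) (hB : IsCompact B)
    (he : ContinuousOn e B) (hinj : InjOn e B) (hlu : l ≤ u) (hBlu : B ⊆ Icc l u)
    (hac : ∀ y ∈ Icc l u, IsAcyclic (coneCompl (e '' (B ∩ {x | ∀ i ∈ s, x i = y i})))) :
    IsAcyclic (coneCompl (e '' B)) := by
  induction s using Finset.induction_on generalizing B with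
  | empty => simpa using hac l ⟨le_rfl, hlu⟩
  | insert j s hj ih =>
    have hcont : Continuous fun x : ι → ℝ => x j := continuous_apply j
    refine isAcyclic_coneCompl_image_of_levels hB he hinj hcont.continuousOn (hlu j)
      (fun x hx => ⟨(hBlu hx).1 j, (hBlu hx).2 j⟩) fun t ht => ?_
    refine ih (hB.inter_right (isClosed_singleton.preimage hcont)) (he.mono inter_subset_left)
      (hinj.mono inter_subset_left) (inter_subset_left.trans hBlu) fun y hy => ?_
    have hfiber : B ∩ (fun x => x j) ⁻¹' {t} ∩ {x | ∀ i ∈ s, x i = y i} =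
        B ∩ {x | ∀ i ∈ insert j s, x i = Function.update y j t i} := by
      have hupdate : ∀ i ∈ s, Function.update y j t i = y i := fun i hi =>
        Function.update_of_ne (ne_of_mem_of_not_mem hi hj) _ _
      ext x
      simp +contextual [and_assoc, hupdate]
    rw [hfiber]
    exact hac _ ⟨le_update_iff.2 ⟨ht.1, fun i _ => hy.1 i⟩,
      update_le_iff.2 ⟨ht.2, fun i _ => hy.2 i⟩⟩

variable {lo hi c α β α' β' : ι → ℝ} {s : Finset ι} {j : ι}

open Classical in
lemma coneCompl_image_boxSection_insert_sdiff (O : Set (ι → ℝ)) :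
    coneCompl (e '' (boxSection lo hi c (insert j s) \ O)) =
      coneCompl (e '' ({x ∈ boxSection lo hi c (insert j s) | x j ∈ Icc (lo j) (c j)} \ O)) ∩
      coneCompl (e '' ({x ∈ boxSection lo hi c (insert j s) | x j ∈ Icc (c j) (hi j)} \ O)) := by
  rw [← coneCompl_union, ← image_union, ← union_sdiff_distrib, union_slabs_eq_boxSection_insert]

open Classical in
lemma coneCompl_image_boxSection_sdiff (hinj : InjOn e (Icc lo hi)) (hc : c ∈ Icc lo hi)
    (hj : j ∉ s) (O : Set (ι → ℝ)) :
    coneCompl (e '' (boxSection lo hi c s \ O)) =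
      coneCompl (e '' ({x ∈ boxSection lo hi c (insert j s) | x j ∈ Icc (lo j) (c j)} \ O)) ∪
      coneCompl (e '' ({x ∈ boxSection lo hi c (insert j s) | x j ∈ Icc (c j) (hi j)} \ O)) := by
  have hsub (p q : ℝ) : {x ∈ boxSection lo hi c (insert j s) | x j ∈ Icc p q} \ O ⊆ Icc lo hi :=
    fun x hx => boxSection_subset _ hx.1.1
  rw [← coneCompl_inter, ← hinj.image_inter (hsub _ _) (hsub _ _),
    ← inter_slabs_eq_boxSection hc hj]
  exact congrArg (fun S => coneCompl (e '' S)) inf_sdiff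

variable [Finite ι]

lemma isAcyclic_coneCompl_image_Icc (hlu : l ≤ u) (he : ContinuousOn e (Icc l u))
    (hinj : InjOn e (Icc l u)) : IsAcyclic (coneCompl (e '' Icc l u)) := by
  cases nonempty_fintype ι
  refine isAcyclic_coneCompl_image_of_finset Finset.univ isCompact_Icc he hinj hlu Subset.rfl
    fun y hy => ?_
  have : Icc l u ∩ {x | ∀ i ∈ Finset.univ, x i = y i} = {y} := by
    simpa [← funext_iff, ofPred_eq_eq_singleton] using hy
  rw [this, image_singleton]
  exact isAcyclic_coneCompl_singleton _

open Classical in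
lemma isAcyclic_coneCompl_image_of_lines (j : ι) (hB : IsCompact B) (he : ContinuousOn e B)
    (hinj : InjOn e B) (hlu : l ≤ u) (hBlu : B ⊆ Icc l u)
    (hline : ∀ y ∈ Icc l u, ∃ a b, a ≤ b ∧ {t | Function.update y j t ∈ B} = Icc a b) :
    IsAcyclic (coneCompl (e '' B)) := by
  cases nonempty_fintype ι
  refine isAcyclic_coneCompl_image_of_finset (Finset.univ.erase j) hB he hinj hlu hBlu
    fun y hy => ?_
  obtain ⟨a, b, hab, hline⟩ := hline y hy
  have hcont (i : ι) : Continuous fun x : ι → ℝ => x i := continuous_apply i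
  have heq {x : ι → ℝ} (hx : ∀ i ∈ Finset.univ.erase j, x i = y i) :
      x = Function.update y j (x j) :=
    Function.eq_update_iff.2 ⟨rfl, fun i hi => hx i (by simp [hi])⟩
  refine isAcyclic_coneCompl_image_of_levels (h := fun x => x j)
    (hB.inter_right ?_) (he.mono inter_subset_left) (hinj.mono inter_subset_left)
    (hcont j).continuousOn hab ?_ fun t ht => ?_
  · simp only [ofPred_forall]
    exact isClosed_biInter fun i _ => isClosed_singleton.preimage (hcont i)
  · rintro x ⟨hx, hxy⟩
    rw [← hline]
    rwa [heq hxy] at hx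
  · have : B ∩ {x | ∀ i ∈ Finset.univ.erase j, x i = y i} ∩ (fun x => x j) ⁻¹' {t} =
        {Function.update y j t} := by
      rw [← hline] at ht
      refine Subset.antisymm ?_ (singleton_subset_iff.2 ⟨⟨ht, ?_⟩, by simp⟩)
      · rintro x ⟨⟨-, hxy⟩, rfl⟩
        exact heq hxy
      · simp +contextual
    rw [this, image_singleton]
    exact isAcyclic_coneCompl_singleton _

open Classical in
lemma isAcyclic_coneCompl_image_slab_sdiff_openBox (hlu : l ≤ u)
    (he : ContinuousOn e (Icc l u)) (hinj : InjOn e (Icc l u)) {α β : ι → ℝ} {j : ι}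
    {p q p' q' : ℝ} (hpq : p ≤ q) (hp : l j ≤ p) (hq : q ≤ u j) (hpq' : p' ≤ q')
    (hj : Icc p q \ Ioo (α j) (β j) = Icc p' q') :
    IsAcyclic (coneCompl (e '' ({x ∈ Icc l u | x j ∈ Icc p q} \ openBox α β))) := by
  have hsub : {x ∈ Icc l u | x j ∈ Icc p q} \ openBox α β ⊆ Icc l u :=
    fun x hx => hx.1.1
  have hcompact : IsCompact ({x ∈ Icc l u | x j ∈ Icc p q} \ openBox α β) :=
    (isCompact_Icc.inter_right (isClosed_Icc.preimage (continuous_apply j))).diff isOpen_openBox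
  refine isAcyclic_coneCompl_image_of_lines j hcompact (he.mono hsub) (hinj.mono hsub) hlu hsub
    fun y hy => ?_
  have hIcc {t : ℝ} (ht : t ∈ Icc p q) : Function.update y j t ∈ Icc l u :=
    ⟨le_update_iff.2 ⟨hp.trans ht.1, fun i _ => hy.1 i⟩,
      update_le_iff.2 ⟨ht.2.trans hq, fun i _ => hy.2 i⟩⟩
  have hbox (t : ℝ) : Function.update y j t ∈ openBox α β ↔
      t ∈ Ioo (α j) (β j) ∧ ∀ i ≠ j, y i ∈ Ioo (α i) (β i) := by
    rw [mem_openBox]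
    exact Function.forall_update_iff y fun i x => x ∈ Ioo (α i) (β i)
  by_cases hy' : ∀ i ≠ j, y i ∈ Ioo (α i) (β i)
  · refine ⟨p', q', hpq', ?_⟩
    rw [← hj]
    ext t
    have := @hIcc t
    simp only [mem_ofPred_eq, mem_sdiff, hbox, Function.update_self, and_iff_left hy']
    tauto
  · refine ⟨p, q, hpq, ?_⟩
    ext t
    have := @hIcc t
    simp only [mem_ofPred_eq, mem_sdiff, hbox, Function.update_self]
    tauto

open Classical in
lemma isAcyclic_coneCompl_image_lower_slab_sdiff_openBox (he : ContinuousOn e (Icc lo hi))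
    (hinj : InjOn e (Icc lo hi)) (hc : c ∈ openBox α β) (hα : lo ≤ α) (hβ : β ≤ hi) :
    IsAcyclic (coneCompl (e '' ({x ∈ boxSection lo hi c (insert j s) |
      x j ∈ Icc (lo j) (c j)} \ openBox α β))) := by
  have hcI : c ∈ Icc lo hi := Icc_subset_Icc hα hβ (openBox_subset_Icc hc)
  obtain ⟨hαc, hcβ⟩ := mem_openBox.1 hc j
  have hsub := boxSection_subset (lo := lo) (hi := hi) (c := c) (insert j s)
  rw [boxSection_eq_Icc hcI] at hsub ⊢
  refine isAcyclic_coneCompl_image_slab_sdiff_openBox ?_ (he.mono hsub) (hinj.mono hsub)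
    (hcI.1 j) (by simp) (by simpa using hcI.2 j) (hα j) ?_
  · exact (insert j s).piecewise_le_piecewise (hcI.1.trans hcI.2) le_rfl
  · ext t
    simp only [mem_sdiff, mem_Icc, mem_Ioo]
    grind

open Classical in
lemma isAcyclic_coneCompl_image_upper_slab_sdiff_openBox (he : ContinuousOn e (Icc lo hi))
    (hinj : InjOn e (Icc lo hi)) (hc : c ∈ openBox α β) (hα : lo ≤ α) (hβ : β ≤ hi) :
    IsAcyclic (coneCompl (e '' ({x ∈ boxSection lo hi c (insert j s) |
      x j ∈ Icc (c j) (hi j)} \ openBox α β))) := by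
  have hcI : c ∈ Icc lo hi := Icc_subset_Icc hα hβ (openBox_subset_Icc hc)
  obtain ⟨hαc, hcβ⟩ := mem_openBox.1 hc j
  have hsub := boxSection_subset (lo := lo) (hi := hi) (c := c) (insert j s)
  rw [boxSection_eq_Icc hcI] at hsub ⊢
  refine isAcyclic_coneCompl_image_slab_sdiff_openBox ?_ (he.mono hsub) (hinj.mono hsub)
    (hcI.2 j) (by simpa using hcI.1 j) (by simp) (hβ j) ?_
  · exact (insert j s).piecewise_le_piecewise (hcI.1.trans hcI.2) le_rfl
  · ext t
    simp only [mem_sdiff, mem_Icc, mem_Ioo]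
    grind

lemma isOpen_coneCompl_image_slab_sdiff_openBox (he : ContinuousOn e (Icc lo hi))
    (hc : c ∈ Icc lo hi) (p q : ℝ) :
    IsOpen (coneCompl (e '' ({x ∈ boxSection lo hi c s | x j ∈ Icc p q} \ openBox α β))) := by
  classical
  refine isOpen_coneCompl (IsCompact.image_of_continuousOn ?_
    (he.mono fun x hx => boxSection_subset s hx.1.1))
  rw [boxSection_eq_Icc hc]
  exact (isCompact_Icc.inter_right (isClosed_Icc.preimage (continuous_apply j))).diff
    isOpen_openBox

theorem hasOneClass_coneCompl_image_boxSection_sdiff_openBox [FiniteDimensional ℝ E]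
    (he : ContinuousOn e (Icc lo hi)) (hinj : InjOn e (Icc lo hi)) (hc : c ∈ openBox α β)
    (hlo : lo ≤ α') (hα : α' ≤ α) (hβ : β ≤ β') (hhi : β' ≤ hi) {n : ℕ}
    (hn : n + s.card = Module.finrank ℝ E + 1) :
    HasAtMostOneClass n (coneCompl (e '' (boxSection lo hi c s \ openBox α β)))
        (coneCompl (e '' (boxSection lo hi c s \ openBox α β))) ∧
      HasPersistentClass n (coneCompl (e '' (boxSection lo hi c s \ openBox α β)))
        (coneCompl (e '' (boxSection lo hi c s \ openBox α' β'))) := by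
  classical
  have hc' : c ∈ openBox α' β' := openBox_mono hα hβ hc
  have hcI : c ∈ Icc lo hi := Icc_subset_Icc hlo hhi (openBox_subset_Icc hc')
  induction s using Finset.induction_on generalizing n with
  | empty =>
    have hV := hasOneClass_compl_zero (V := E × ℝ)
    rw [Module.finrank_prod, Module.finrank_self, ← hn, Finset.card_empty, add_zero] at hV
    rw [boxSection_empty hcI, sdiff_eq_empty.2 (singleton_subset_iff.2 hc),
      sdiff_eq_empty.2 (singleton_subset_iff.2 hc'), image_empty, coneCompl_empty]
    exact hV
  | insert j s hj ih =>
    obtain ⟨hone, hpers⟩ := ih (n := n + 1) (by rw [← hn, Finset.card_insert_of_notMem hj]; ring)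
    have hopen (p q : ℝ) := isOpen_coneCompl_image_slab_sdiff_openBox (s := insert j s)
      (j := j) (α := α) (β := β) he hcI p q
    have hmono (p q : ℝ) := coneCompl_anti (E := E) (image_mono (f := e) (sdiff_subset_sdiff_right
      (s := {x ∈ boxSection lo hi c (insert j s) | x j ∈ Icc p q}) (openBox_mono hα hβ)))
    rw [coneCompl_image_boxSection_sdiff hinj hcI hj] at hone
    rw [coneCompl_image_boxSection_sdiff hinj hcI hj,
      coneCompl_image_boxSection_sdiff hinj hcI hj] at hpers
    rw [coneCompl_image_boxSection_insert_sdiff, coneCompl_image_boxSection_insert_sdiff]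
    refine ⟨hone.inter (hopen _ _) (hopen _ _) ?_ ?_ Subset.rfl Subset.rfl,
      hpers.inter (hopen _ _) (hopen _ _) ?_ ?_ (hmono _ _) (hmono _ _)⟩
    · exact isAcyclic_coneCompl_image_lower_slab_sdiff_openBox he hinj hc (hlo.trans hα)
        (hβ.trans hhi)
    · exact isAcyclic_coneCompl_image_upper_slab_sdiff_openBox he hinj hc (hlo.trans hα)
        (hβ.trans hhi)
    · exact isAcyclic_coneCompl_image_lower_slab_sdiff_openBox he hinj hc' hlo hhi
    · exact isAcyclic_coneCompl_image_upper_slab_sdiff_openBox he hinj hc' hlo hhi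

end Box

/-! ### Chains of points and connected components -/

section Component

variable {V : Type*} [NormedAddCommGroup V] [NormedSpace ℝ V] {W W' : Set V} {a b c : V}

lemma singleton_mem_chains (h : a ∈ W) : simplex [a] ∈ chains 1 W :=
  simplex_mem_chains rfl (by simpa [hull] using h)

lemma simplex_add_simplex_mem_cycles (ha : a ∈ W) (hb : b ∈ W) :
    simplex [a] + simplex [b] ∈ cycles 1 W :=
  add_mem_cycles (singleton_mem_chains ha) (singleton_mem_chains hb) (by simp)

lemma simplex_add_simplex_mem_boundaries_of_mem_connectedComponentIn (hW : IsOpen W)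
    (h : b ∈ connectedComponentIn W a) : simplex [a] + simplex [b] ∈ boundaries 1 W := by
  have ha : a ∈ W := connectedComponentIn_nonempty_iff.1 ⟨b, h⟩
  refine isPreconnected_connectedComponentIn.induction₂
    (fun a b => simplex [a] + simplex [b] ∈ boundaries 1 W) (fun x hx => ?_)
    (fun x y z _ _ _ hxy hyz => ?_) (fun x y _ _ hxy => by rwa [add_comm])
    (mem_connectedComponentIn ha) h
  · obtain ⟨r, hr, hrW⟩ := Metric.isOpen_iff.1 hW x (connectedComponentIn_subset W a hx)
    filter_upwards [mem_nhdsWithin_of_mem_nhds (Metric.ball_mem_nhds x hr)] with y hy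
    have hxy : hull [y, x] ⊆ W :=
      (hull_subset (convex_ball x r) (by simpa [hr] using hy)).trans hrW
    simpa [boundary_simplex_cons] using boundary_mem_boundaries (simplex_mem_chains rfl hxy)
  · have := add_mem hxy hyz
    rwa [add_assoc, ← add_assoc (simplex [y]), ZModModule.add_self, zero_add] at this

open Classical in
lemma mem_connectedComponentIn_of_simplex_add_simplex_mem_boundaries (ha : a ∈ W)
    (h : simplex [a] + simplex [b] ∈ boundaries 1 W) : b ∈ connectedComponentIn W a := by
  let count : AffineChain V →ₗ[ZMod 2] ZMod 2 := Finsupp.linearCombination (ZMod 2)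
    fun l => (l.countP (· ∈ connectedComponentIn W a) : ZMod 2)
  have hcount (x : V) : count (simplex [x]) = if x ∈ connectedComponentIn W a then 1 else 0 := by
    simp [count, List.countP_singleton]
  have hboundary : count (simplex [a] + simplex [b]) ∈ (⊥ : Submodule (ZMod 2) (ZMod 2)) := by
    obtain ⟨z, hz, hzb⟩ := h
    rw [← hzb]
    refine map_mem_of_mem_supported (f := count ∘ₗ boundary) ?_ hz
    rintro l ⟨hl, hlW⟩
    obtain ⟨x, y, rfl⟩ := List.length_eq_two.1 hl
    have hmem {u v : V} (hu : u ∈ hull [x, y]) (hv : v ∈ hull [x, y])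
        (hua : u ∈ connectedComponentIn W a) : v ∈ connectedComponentIn W a := by
      rw [connectedComponentIn_eq hua]
      exact (convex_hull _).isPreconnected.subset_connectedComponentIn hu hlW hv
    have hx : x ∈ hull [x, y] := mem_hull (by simp)
    have hy : y ∈ hull [x, y] := mem_hull (by simp)
    have hxy : boundary (simplex [x, y]) = simplex [y] + simplex [x] := by simp
    rw [LinearMap.comp_apply, hxy, map_add, hcount, hcount, Submodule.mem_bot,
      show x ∈ connectedComponentIn W a ↔ y ∈ connectedComponentIn W a from
        ⟨hmem hx hy, hmem hy hx⟩, ZModModule.add_self]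
  rw [Submodule.mem_bot, map_add, hcount, hcount, if_pos (mem_connectedComponentIn ha)]
    at hboundary
  by_contra hb
  rw [if_neg hb] at hboundary
  simp at hboundary

lemma cycles_one_le_boundaries_one (hW' : IsOpen W')
    (h : ∀ a ∈ W, ∀ b ∈ W, b ∈ connectedComponentIn W' a) : cycles 1 W ≤ boundaries 1 W' := by
  intro z hz
  rcases W.eq_empty_or_nonempty with rfl | ⟨a, ha⟩
  · have := hz.1
    rw [chains_succ_empty] at this
    rw [(Submodule.mem_bot _).1 this]
    exact zero_mem _
  · have : (LinearMap.id (R := ZMod 2) (M := AffineChain V) + cone a ∘ₗ boundary) z ∈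
        boundaries 1 W' := by
      refine map_mem_of_mem_supported ?_ hz.1
      rintro l ⟨hl, hlW⟩
      obtain ⟨x, rfl⟩ := List.length_eq_one_iff.1 hl
      simpa using simplex_add_simplex_mem_boundaries_of_mem_connectedComponentIn hW'
        (h x (hlW (mem_hull (by simp))) a ha)
    simpa [LinearMap.mem_ker.1 hz.2] using this

lemma HasAtMostOneClass.mem_connectedComponentIn (h : HasAtMostOneClass 1 W W') (hW : W ⊆ W')
    (ha : a ∈ W) (hb : b ∈ W) (hc : c ∈ W) : b ∈ connectedComponentIn W' a ∨
      c ∈ connectedComponentIn W' b ∨ c ∈ connectedComponentIn W' a := by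
  rcases h _ (simplex_add_simplex_mem_cycles ha hb) _ (simplex_add_simplex_mem_cycles hb hc)
    with hB | hB | hB
  · exact .inl (mem_connectedComponentIn_of_simplex_add_simplex_mem_boundaries (hW ha) hB)
  · exact .inr (.inl (mem_connectedComponentIn_of_simplex_add_simplex_mem_boundaries (hW hb) hB))
  · rw [add_assoc, ← add_assoc (simplex [b]), ZModModule.add_self, zero_add] at hB
    exact .inr (.inr (mem_connectedComponentIn_of_simplex_add_simplex_mem_boundaries (hW ha) hB))

lemma HasPersistentClass.exists_notMem_connectedComponentIn (h : HasPersistentClass 1 W W')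
    (hW' : IsOpen W') : ∃ a ∈ W, ∃ b ∈ W, b ∉ connectedComponentIn W' a := by
  obtain ⟨z, hz, hz'⟩ := h
  by_contra! hcon
  exact hz' (cycles_one_le_boundaries_one hW' hcon hz)

lemma HasPersistentClass.eq_empty (h : HasPersistentClass 0 W W') : W' = ∅ := by
  obtain ⟨z, hz, hz'⟩ := h
  by_contra hne
  obtain ⟨a, ha⟩ := nonempty_iff_ne_empty.2 hne
  rcases eq_zero_or_eq_simplex_nil hz.1 with rfl | rfl
  · exact hz' (zero_mem _)
  · exact hz' ⟨simplex [a], singleton_mem_chains ha, by simp⟩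

end Component

section Cone

variable {E : Type*} [NormedAddCommGroup E] [NormedSpace ℝ E] {S : Set E} {x : E × ℝ}

lemma isPreconnected_openCone (hS : IsPreconnected S) : IsPreconnected (openCone S) := by
  have himage : openCone S = (fun p : E × ℝ => (p.2 • p.1, p.2)) '' S ×ˢ Ioi 0 := by
    ext y
    constructor
    · intro hy
      exact ⟨(y.2⁻¹ • y.1, y.2), ⟨hy.2, hy.1⟩,
        Prod.ext (smul_inv_smul₀ hy.1.ne' y.1) rfl⟩
    · rintro ⟨p, ⟨hp, hp0⟩, rfl⟩
      exact ⟨hp0, by simpa only [inv_smul_smul₀ (ne_of_gt (mem_Ioi.1 hp0))] using hp⟩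
  rw [himage]
  exact (hS.prod isPreconnected_Ioi).image _ (by fun_prop)

lemma connectedComponentIn_openCone (hx : x ∈ openCone S) : connectedComponentIn (openCone S) x =
    openCone (connectedComponentIn S (x.2⁻¹ • x.1)) := by
  refine Subset.antisymm (fun y hy => ⟨(connectedComponentIn_subset _ _ hy).1, ?_⟩) ?_
  · have hcont : ContinuousOn (fun y : E × ℝ => y.2⁻¹ • y.1) (openCone S) :=
      (continuous_snd.continuousOn.inv₀ fun y hy => ne_of_gt hy.1).smul continuous_fst.continuousOn
    exact connectedComponentIn_mono _ (image_subset_iff.2 fun y hy => hy.2)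
      (hcont.mapsTo_connectedComponentIn hx hy)
  · exact (isPreconnected_openCone isPreconnected_connectedComponentIn).subset_connectedComponentIn
      ⟨hx.1, mem_connectedComponentIn hx.2⟩ (openCone_mono (connectedComponentIn_subset _ _))

lemma openCone_inter_coneCompl (S S' : Set E) :
    openCone S ∩ coneCompl S' = openCone (S \ S') := by
  ext y
  have : 0 < y.2 → y ≠ 0 := by rintro h rfl; exact lt_irrefl _ h
  simp only [coneCompl, openCone, mem_sdiff, mem_inter_iff, mem_ofPred_eq, mem_compl_iff,
    mem_singleton_iff]
  tauto

end Cone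

end AffineChain

/-! ### Local separation by embedded boxes -/

/-- The set `Q` has exactly two sides at `x`: for some arbitrarily small neighbourhoods `V ⊆ U`
of `x`, at most two components of `U \ Q` meet `V`, while near every point of `V ∩ Q` there are
two of them. -/
def IsTwoSidedAt {X : Type*} [TopologicalSpace X] (Q : Set X) (x : X) : Prop :=
  ∀ N ∈ nhds x, ∃ U ⊆ N, ∃ V ⊆ U, IsOpen U ∧ IsOpen V ∧ x ∈ V ∧
    (∀ p ∈ V \ Q, ∀ q ∈ V \ Q, ∀ w ∈ V \ Q, q ∈ connectedComponentIn (U \ Q) p ∨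
      w ∈ connectedComponentIn (U \ Q) q ∨ w ∈ connectedComponentIn (U \ Q) p) ∧
    ∀ y ∈ V ∩ Q, ∀ O ∈ nhds y, ∃ p ∈ (O ∩ V) \ Q, ∃ q ∈ (O ∩ V) \ Q,
      q ∉ connectedComponentIn (U \ Q) p

namespace AffineChain

lemma exists_image_openBox_subset {ι X : Type*} [Finite ι] [TopologicalSpace X] {e : (ι → ℝ) → X}
    {U : Set X} {lo hi c : ι → ℝ} (he : ContinuousOn e (Icc lo hi)) (hc : c ∈ openBox lo hi)
    (hU : U ∈ nhds (e c)) :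
    ∃ α β, c ∈ openBox α β ∧ lo ≤ α ∧ β ≤ hi ∧ e '' openBox α β ⊆ U := by
  have hIcc : Icc lo hi ∈ nhds c :=
    Filter.mem_of_superset (isOpen_openBox.mem_nhds hc) openBox_subset_Icc
  obtain ⟨α, β, hcαβ, hα, hβ, hsub⟩ := exists_openBox_subset hc (he.continuousAt hIcc hU)
  exact ⟨α, β, hcαβ, hα, hβ, image_subset_iff.2 hsub⟩

section EmbeddedBox

variable {E : Type*} [NormedAddCommGroup E] [NormedSpace ℝ E] {ι : Type*}
  {e : (ι → ℝ) → E} {lo hi α β c : ι → ℝ} {S S' U V : Set E} {a b d : E}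

lemma isAcyclic_openCone (hS : Convex ℝ S) (ha : a ∈ S) : IsAcyclic (openCone S) :=
  IsAcyclic.of_starConvex (v := (a, 1)) ⟨one_pos, by simpa using ha⟩
    ((convex_openCone hS).starConvex ⟨one_pos, by simpa using ha⟩)

lemma mk_one_mem_openCone : (a, (1 : ℝ)) ∈ openCone S ↔ a ∈ S := by simp [openCone]

lemma mk_one_mem_connectedComponentIn_openCone (ha : a ∈ S) :
    (b, (1 : ℝ)) ∈ connectedComponentIn (openCone S) (a, 1) ↔ b ∈ connectedComponentIn S a := by
  rw [connectedComponentIn_openCone (mk_one_mem_openCone.2 ha), mk_one_mem_openCone, inv_one,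
    one_smul]

lemma HasAtMostOneClass.mem_connectedComponentIn_of_openCone
    (h : HasAtMostOneClass 1 (openCone S) (openCone S')) (hS : S ⊆ S') (ha : a ∈ S) (hb : b ∈ S)
    (hd : d ∈ S) : b ∈ connectedComponentIn S' a ∨ d ∈ connectedComponentIn S' b ∨
      d ∈ connectedComponentIn S' a := by
  simpa only [mk_one_mem_connectedComponentIn_openCone (hS ha),
    mk_one_mem_connectedComponentIn_openCone (hS hb)] using
    h.mem_connectedComponentIn (openCone_mono hS) (mk_one_mem_openCone.2 ha)
      (mk_one_mem_openCone.2 hb) (mk_one_mem_openCone.2 hd)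

lemma HasPersistentClass.exists_notMem_connectedComponentIn_of_openCone
    (h : HasPersistentClass 1 (openCone S) (openCone S')) (hS : S ⊆ S') (hS' : IsOpen S') :
    ∃ a ∈ S, ∃ b ∈ S, b ∉ connectedComponentIn S' a := by
  obtain ⟨x, hx, y, hy, hxy⟩ := h.exists_notMem_connectedComponentIn (isOpen_openCone hS')
  rw [connectedComponentIn_openCone (openCone_mono hS hx)] at hxy
  exact ⟨_, hx.2, _, hy.2, fun h => hxy ⟨hy.1, h⟩⟩

lemma openCone_union_coneCompl_subset_coneCompl_image_sdiff
    (hV : Disjoint V (e '' (Icc lo hi \ openBox α β))) :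
    openCone V ∪ coneCompl (e '' Icc lo hi) ⊆ coneCompl (e '' (Icc lo hi \ openBox α β)) := by
  rw [← coneCompl_sdiff]
  exact coneCompl_anti fun y hy =>
    ⟨image_mono sdiff_subset hy, fun hyV => disjoint_left.1 hV hyV hy⟩

lemma coneCompl_image_sdiff_subset_openCone_union_coneCompl (hU : e '' openBox α β ⊆ U) :
    coneCompl (e '' (Icc lo hi \ openBox α β)) ⊆ openCone U ∪ coneCompl (e '' Icc lo hi) := by
  rw [← coneCompl_sdiff]
  refine coneCompl_anti ?_
  rintro _ ⟨⟨x, hx, rfl⟩, hxU⟩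
  exact ⟨x, ⟨hx, fun hxb => hxU (hU ⟨x, hxb, rfl⟩)⟩, rfl⟩

variable [Fintype ι]

lemma card_le_finrank_of_injOn_Icc [FiniteDimensional ℝ E] (hlt : ∀ i, lo i < hi i)
    (he : ContinuousOn e (Icc lo hi)) (hinj : InjOn e (Icc lo hi)) :
    Fintype.card ι ≤ Module.finrank ℝ E := by
  by_contra! hcard
  obtain ⟨s, -, hs⟩ := Finset.exists_subset_card_eq (s := (Finset.univ : Finset ι)) hcard
  have hc : (fun i => (lo i + hi i) / 2) ∈ openBox lo hi :=
    mem_openBox.2 fun i => ⟨by linarith [hlt i], by linarith [hlt i]⟩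
  have hempty := (hasOneClass_coneCompl_image_boxSection_sdiff_openBox (s := s) (n := 0) he hinj hc
    le_rfl le_rfl le_rfl le_rfl (by omega)).2.eq_empty
  have hmem : ((0, -1) : E × ℝ) ∈ (∅ : Set (E × ℝ)) := by
    rw [← hempty]
    exact ⟨by simp, fun h => by linarith [show (0 : ℝ) < -1 from h.1]⟩
  exact hmem

section Codimension

variable [FiniteDimensional ℝ E] (hcard : Fintype.card ι + 1 = Module.finrank ℝ E)
  (he : ContinuousOn e (Icc lo hi)) (hinj : InjOn e (Icc lo hi))
include hcard he hinj

lemma hasAtMostOneClass_openCone_sdiff_image_Icc (hc : c ∈ openBox α β) (hα : lo ≤ α) (hβ : β ≤ hi)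
    (hVc : Convex ℝ V) (hU : IsOpen U) (hVU : V ⊆ U) (hcV : e c ∈ V)
    (hboxU : e '' openBox α β ⊆ U) (hVbox : Disjoint V (e '' (Icc lo hi \ openBox α β))) :
    HasAtMostOneClass 1 (openCone (V \ e '' Icc lo hi)) (openCone (U \ e '' Icc lo hi)) := by
  have hcI : c ∈ Icc lo hi := Icc_subset_Icc hα hβ (openBox_subset_Icc hc)
  have h := (hasOneClass_coneCompl_image_boxSection_sdiff_openBox (s := Finset.univ) (n := 2)
    he hinj hc hα le_rfl le_rfl hβ (by rw [Finset.card_univ]; omega)).1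
  rw [boxSection_univ] at h
  rw [← openCone_inter_coneCompl, ← openCone_inter_coneCompl]
  exact (h.mono (openCone_union_coneCompl_subset_coneCompl_image_sdiff hVbox)
    (coneCompl_image_sdiff_subset_openCone_union_coneCompl hboxU)).inter (isOpen_openCone hU)
      (isOpen_coneCompl (isCompact_Icc.image_of_continuousOn he)) (isAcyclic_openCone hVc hcV)
      (isAcyclic_coneCompl_image_Icc (hcI.1.trans hcI.2) he hinj) (openCone_mono hVU) Subset.rfl

lemma hasPersistentClass_openCone_sdiff_image_Icc (hc : c ∈ openBox α β) (hα : lo ≤ α)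
    (hβ : β ≤ hi) (hUc : Convex ℝ U) (hV : IsOpen V) (hVU : V ⊆ U) (hboxV : e '' openBox α β ⊆ V)
    (hUbox : Disjoint U (e '' (Icc lo hi \ openBox lo hi))) :
    HasPersistentClass 1 (openCone (V \ e '' Icc lo hi)) (openCone (U \ e '' Icc lo hi)) := by
  have hcI : c ∈ Icc lo hi := Icc_subset_Icc hα hβ (openBox_subset_Icc hc)
  have h := (hasOneClass_coneCompl_image_boxSection_sdiff_openBox (s := Finset.univ) (n := 2)
    he hinj hc le_rfl hα hβ le_rfl (by rw [Finset.card_univ]; omega)).2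
  rw [boxSection_univ] at h
  rw [← openCone_inter_coneCompl, ← openCone_inter_coneCompl]
  exact (h.mono (coneCompl_image_sdiff_subset_openCone_union_coneCompl hboxV)
    (openCone_union_coneCompl_subset_coneCompl_image_sdiff hUbox)).inter (isOpen_openCone hV)
      (isOpen_coneCompl (isCompact_Icc.image_of_continuousOn he))
      (isAcyclic_openCone hUc (hVU (hboxV ⟨c, hc, rfl⟩)))
      (isAcyclic_coneCompl_image_Icc (hcI.1.trans hcI.2) he hinj) (openCone_mono hVU) Subset.rfl

theorem isTwoSidedAt_image_Icc (hc : c ∈ openBox lo hi) :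
    IsTwoSidedAt (e '' Icc lo hi) (e c) := by
  intro N hN
  have hK : IsClosed (e '' Icc lo hi) := (isCompact_Icc.image_of_continuousOn he).isClosed
  have hclosed (α β : ι → ℝ) : IsClosed (e '' (Icc lo hi \ openBox α β)) :=
    ((isCompact_Icc.diff isOpen_openBox).image_of_continuousOn (he.mono sdiff_subset)).isClosed
  have hnot {α β : ι → ℝ} (h : c ∈ openBox α β) : e c ∉ e '' (Icc lo hi \ openBox α β) := by
    rintro ⟨x, ⟨hx, hxb⟩, hxc⟩
    exact hxb (hinj hx (openBox_subset_Icc hc) hxc ▸ h)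
  have hball {α β : ι → ℝ} (h : c ∈ openBox α β) {M : Set E} (hM : M ∈ nhds (e c)) :
      ∃ r > 0, Metric.ball (e c) r ⊆ M \ e '' (Icc lo hi \ openBox α β) :=
    Metric.mem_nhds_iff.1 (Filter.inter_mem hM ((hclosed α β).isOpen_compl.mem_nhds (hnot h)))
  obtain ⟨r, hr, hrN⟩ := hball hc hN
  set U := Metric.ball (e c) r
  obtain ⟨α, β, hcαβ, hα, hβ, hboxU⟩ :=
    exists_image_openBox_subset he hc (Metric.ball_mem_nhds (e c) hr)
  obtain ⟨ρ, hρ, hρU⟩ := hball hcαβ (Metric.ball_mem_nhds (e c) hr)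
  set V := Metric.ball (e c) ρ
  have hVU : V ⊆ U := fun y hy => (hρU hy).1
  have hone := hasAtMostOneClass_openCone_sdiff_image_Icc hcard he hinj hcαβ hα hβ
    (convex_ball (e c) ρ) Metric.isOpen_ball hVU (Metric.mem_ball_self hρ) hboxU
    (disjoint_left.2 fun y hy => (hρU hy).2)
  refine ⟨U, fun y hy => (hrN hy).1, V, hVU, Metric.isOpen_ball, Metric.isOpen_ball,
    Metric.mem_ball_self hρ, fun p hp q hq w hw => hone.mem_connectedComponentIn_of_openCone
      (sdiff_subset_sdiff_left hVU) hp hq hw, ?_⟩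
  rintro _ ⟨hyV, y, hy, rfl⟩ O hO
  have hyb : y ∈ openBox lo hi := by
    by_contra hyb
    exact (hrN (hVU hyV)).2 ⟨y, ⟨hy, hyb⟩, rfl⟩
  obtain ⟨α', β', hyαβ, hα', hβ', hbox⟩ := exists_image_openBox_subset he hyb
    (Filter.inter_mem (interior_mem_nhds.2 hO) (Metric.isOpen_ball.mem_nhds hyV))
  have hsub : interior O ∩ V ⊆ U := inter_subset_right.trans hVU
  obtain ⟨p, hp, q, hq, hpq⟩ := (hasPersistentClass_openCone_sdiff_image_Icc hcard he hinj hyαβ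
    hα' hβ' (convex_ball (e c) r) (isOpen_interior.inter Metric.isOpen_ball) hsub hbox
    (disjoint_left.2 fun y hy => (hrN hy).2)).exists_notMem_connectedComponentIn_of_openCone
    (sdiff_subset_sdiff_left hsub) (Metric.isOpen_ball.sdiff hK)
  exact ⟨p, ⟨⟨interior_subset hp.1.1, hp.1.2⟩, hp.2⟩, q, ⟨⟨interior_subset hq.1.1, hq.1.2⟩, hq.2⟩,
    hpq⟩

end Codimension

end EmbeddedBox

end AffineChain

/-! ### Submanifolds of codimension one -/

section Charts

variable {X Y Z : Type*} [TopologicalSpace X] [TopologicalSpace Y] [TopologicalSpace Z]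

lemma exists_Icc_subset_of_mem_nhds {ι : Type*} [Finite ι] {c : ι → ℝ} {M : Set (ι → ℝ)}
    (hM : M ∈ nhds c) :
    ∃ lo hi, c ∈ openBox lo hi ∧ Icc lo hi ⊆ M := by
  cases nonempty_fintype ι
  obtain ⟨δ, hδ, hball⟩ := Metric.nhds_basis_closedBall.mem_iff.1 hM
  rw [closedBall_pi c hδ.le] at hball
  simp only [Real.closedBall_eq_Icc, pi_univ_Icc] at hball
  exact ⟨_, _, mem_openBox.2 fun i => ⟨by linarith, by linarith⟩, hball⟩

lemma exists_box_chart {k : ℕ} [ChartedSpace (EuclideanSpace ℝ (Fin k)) X] (x : X) {N : Set X}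
    (hN : N ∈ nhds x) :
    ∃ (Φ : OpenPartialHomeomorph (Fin k → ℝ) X) (lo hi c : Fin k → ℝ),
      c ∈ openBox lo hi ∧ Φ c = x ∧ Icc lo hi ⊆ Φ.source ∧ MapsTo Φ (Icc lo hi) N := by
  let Φ := ((chartAt (EuclideanSpace ℝ (Fin k)) x).transHomeomorph
    (EuclideanSpace.equiv (Fin k) ℝ).toHomeomorph).symm
  have hx : x ∈ Φ.target := mem_chart_source _ x
  have hΦx : Φ (Φ.symm x) = x := Φ.right_inv hx
  have hM : Φ.source ∩ Φ ⁻¹' N ∈ nhds (Φ.symm x) :=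
    Filter.inter_mem (Φ.open_source.mem_nhds (Φ.map_target hx))
      (Φ.continuousAt (Φ.map_target hx) (by rwa [hΦx]))
  obtain ⟨lo, hi, hc, hsub⟩ := exists_Icc_subset_of_mem_nhds hM
  exact ⟨Φ, lo, hi, _, hc, hΦx, fun y hy => (hsub hy).1, fun y hy => (hsub hy).2⟩

theorem le_of_continuous_of_injective {i d : ℕ} [ChartedSpace (EuclideanSpace ℝ (Fin i)) X]
    [ChartedSpace (EuclideanSpace ℝ (Fin d)) Y] [Nonempty X] {f : X → Y} (hf : Continuous f)
    (hinj : Function.Injective f) : i ≤ d := by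
  obtain ⟨x⟩ := ‹Nonempty X›
  let ψ := chartAt (EuclideanSpace ℝ (Fin d)) (f x)
  obtain ⟨Φ, lo, hi, c, hc, -, hsource, hmaps⟩ := exists_box_chart (k := i) x
    ((ψ.open_source.preimage hf).mem_nhds (mem_chart_source _ (f x)))
  have hcard := AffineChain.card_le_finrank_of_injOn_Icc (e := ψ ∘ f ∘ Φ) (lo := lo) (hi := hi)
    (fun j => ((mem_openBox.1 hc j).1.trans (mem_openBox.1 hc j).2))
    (ψ.continuousOn.comp (hf.comp_continuousOn (Φ.continuousOn.mono hsource)) hmaps)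
    (ψ.injOn.comp (hinj.comp_injOn (Φ.injOn.mono hsource)) hmaps)
  simpa using hcard

lemma apply_mem_connectedComponentIn_image_iff {f : X → Y} {g : Y → X} {S : Set X} {p q : X}
    (hf : ContinuousOn f S) (hg : ContinuousOn g (f '' S)) (hgf : LeftInvOn g f S) (hp : p ∈ S)
    (hq : q ∈ S) :
    f q ∈ connectedComponentIn (f '' S) (f p) ↔ q ∈ connectedComponentIn S p := by
  refine ⟨fun h => ?_, fun h => hf.mapsTo_connectedComponentIn hp h⟩
  have := hg.mapsTo_connectedComponentIn (mem_image_of_mem f hp) h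
  rwa [hgf.image_image, hgf hp, hgf hq] at this

theorem IsTwoSidedAt.map_openPartialHomeomorph {Q : Set X} {Q' : Set Y} {x : X}
    (h : IsTwoSidedAt Q x) (φ : OpenPartialHomeomorph X Y) (hx : x ∈ φ.source)
    (hQ : ∀ᶠ z in nhds x, z ∈ Q ↔ φ z ∈ Q') : IsTwoSidedAt Q' (φ x) := by
  intro N hN
  obtain ⟨U, hUM, V, hVU, hU, hV, hxV, hle, hne⟩ := h _ (Filter.inter_mem
    (Filter.inter_mem (φ.open_source.mem_nhds hx) (φ.continuousAt hx hN)) hQ)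
  have hUs : U ⊆ φ.source := fun u hu => (hUM hu).1.1
  have hUQ (u) (hu : u ∈ U) : u ∈ Q ↔ φ u ∈ Q' := (hUM hu).2
  have image_sdiff {W : Set X} (hW : W ⊆ U) : φ '' (W \ Q) = φ '' W \ Q' := by
    ext y
    constructor
    · rintro ⟨w, ⟨hw, hwQ⟩, rfl⟩
      exact ⟨⟨w, hw, rfl⟩, fun h => hwQ ((hUQ w (hW hw)).2 h)⟩
    · rintro ⟨⟨w, hw, rfl⟩, hwQ⟩
      exact ⟨w, ⟨hw, fun h => hwQ ((hUQ w (hW hw)).1 h)⟩, rfl⟩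
  have hcomp (p) (hp : p ∈ V \ Q) (q) (hq : q ∈ V \ Q) :
      φ q ∈ connectedComponentIn (φ '' U \ Q') (φ p) ↔ q ∈ connectedComponentIn (U \ Q) p := by
    have hs : U \ Q ⊆ φ.source := sdiff_subset.trans hUs
    rw [← image_sdiff Subset.rfl]
    exact apply_mem_connectedComponentIn_image_iff (φ.continuousOn.mono hs)
      (φ.continuousOn_symm.mono (image_subset_iff.2 fun u hu => φ.map_source (hs hu)))
      (φ.leftInvOn.mono hs) ⟨hVU hp.1, hp.2⟩ ⟨hVU hq.1, hq.2⟩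
  refine ⟨φ '' U, image_subset_iff.2 fun u hu => (hUM hu).1.2, φ '' V, image_mono hVU,
    φ.isOpen_image_of_subset_source hU hUs, φ.isOpen_image_of_subset_source hV (hVU.trans hUs),
    ⟨x, hxV, rfl⟩, ?_, ?_⟩
  · rw [← image_sdiff hVU]
    rintro _ ⟨p, hp, rfl⟩ _ ⟨q, hq, rfl⟩ _ ⟨w, hw, rfl⟩
    rw [hcomp p hp q hq, hcomp q hq w hw, hcomp p hp w hw]
    exact hle p hp q hq w hw
  · rintro _ ⟨⟨y, hyV, rfl⟩, hyQ⟩ O hO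
    obtain ⟨p, hp, q, hq, hpq⟩ := hne y ⟨hyV, (hUQ y (hVU hyV)).2 hyQ⟩ (φ ⁻¹' O)
      (φ.continuousAt (hUs (hVU hyV)) hO)
    refine ⟨φ p, ⟨⟨hp.1.1, mem_image_of_mem φ hp.1.2⟩, fun h => hp.2 ((hUQ p (hVU hp.1.2)).2 h)⟩,
      φ q, ⟨⟨hq.1.1, mem_image_of_mem φ hq.1.2⟩, fun h => hq.2 ((hUQ q (hVU hq.1.2)).2 h)⟩, ?_⟩
    rwa [hcomp p ⟨hp.1.2, hp.2⟩ q ⟨hq.1.2, hq.2⟩]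

theorem isTwoSidedAt_range_of_isEmbedding {k : ℕ}
    [ChartedSpace (EuclideanSpace ℝ (Fin (k + 1))) X] [ChartedSpace (EuclideanSpace ℝ (Fin k)) Z]
    {j : Z → X} (hj : Topology.IsEmbedding j) (x : Z) : IsTwoSidedAt (range j) (j x) := by
  let ψ := chartAt (EuclideanSpace ℝ (Fin (k + 1))) (j x)
  have hx : j x ∈ ψ.source := mem_chart_source _ (j x)
  obtain ⟨Φ, lo, hi, c, hc, hΦc, hsource, hmaps⟩ := exists_box_chart (k := k) x
    ((ψ.open_source.preimage hj.continuous).mem_nhds hx)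
  set e : (Fin k → ℝ) → EuclideanSpace ℝ (Fin (k + 1)) := ψ ∘ j ∘ Φ
  have hec : e c = ψ (j x) := by simp [e, hΦc]
  have htwo : IsTwoSidedAt (e '' Icc lo hi) (ψ (j x)) := hec ▸
    AffineChain.isTwoSidedAt_image_Icc (by simp)
      (ψ.continuousOn.comp (hj.continuous.comp_continuousOn (Φ.continuousOn.mono hsource)) hmaps)
      (ψ.injOn.comp (hj.injective.comp_injOn (Φ.injOn.mono hsource)) hmaps) hc
  obtain ⟨O, hO, hOeq⟩ := hj.isInducing.isOpen_iff.1 (Φ.isOpen_image_of_subset_source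
    isOpen_openBox (openBox_subset_Icc.trans hsource))
  have hxO : j x ∈ O := by
    change x ∈ j ⁻¹' O
    rw [hOeq]
    exact ⟨c, hc, hΦc⟩
  rw [← ψ.left_inv hx]
  refine htwo.map_openPartialHomeomorph ψ.symm (ψ.map_source hx) ?_
  filter_upwards [ψ.open_target.mem_nhds (ψ.map_source hx),
    ψ.continuousAt_symm (ψ.map_source hx) (by rw [ψ.left_inv hx]; exact hO.mem_nhds hxO)]
    with z hz hzO
  constructor
  · rintro ⟨y, hy, rfl⟩
    exact ⟨Φ y, (ψ.left_inv (hmaps hy)).symm⟩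
  · rintro ⟨p, hp⟩
    have hpO : p ∈ j ⁻¹' O := by rwa [mem_preimage, hp]
    rw [hOeq] at hpO
    obtain ⟨y, hy, rfl⟩ := hpO
    exact ⟨y, openBox_subset_Icc hy, by simp only [e, Function.comp, hp, ψ.right_inv hz]⟩

end Charts

section Separation

variable {X : Type*} [TopologicalSpace X] {Q C S₁ S₂ S₃ : Set X} {x : X}

lemma connectedComponentIn_subset_of_subset_union {p : X} (h₁ : IsOpen S₁) (h₂ : IsOpen S₂)
    (hd : Disjoint S₁ S₂) (hC : C ⊆ S₁ ∪ S₂) (hpC : p ∈ C) (hp : p ∈ S₁) :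
    connectedComponentIn C p ⊆ S₁ :=
  isPreconnected_connectedComponentIn.subset_left_of_subset_union h₁ h₂ hd
    ((connectedComponentIn_subset C p).trans hC) ⟨p, mem_connectedComponentIn hpC, hp⟩

lemma IsTwoSidedAt.mem_closure_compl (h : IsTwoSidedAt Q x) (hx : x ∈ Q) : x ∈ closure Qᶜ := by
  obtain ⟨_, _, V, _, _, _, hxV, -, hne⟩ := h univ Filter.univ_mem
  rw [mem_closure_iff_nhds]
  intro N hN
  obtain ⟨p, hp, -⟩ := hne x ⟨hxV, hx⟩ N hN
  exact ⟨p, hp.1.1, hp.2⟩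

lemma IsTwoSidedAt.notMem_closure_of_union_eq (h : IsTwoSidedAt Q x) (hC : C ∈ nhds x)
    (h₁ : IsOpen S₁) (h₂ : IsOpen S₂) (h₃ : IsOpen S₃) (h₁₂ : Disjoint S₁ S₂)
    (h₁₃ : Disjoint S₁ S₃) (h₂₃ : Disjoint S₂ S₃) (hS : S₁ ∪ S₂ ∪ S₃ = C \ Q)
    (hx₁ : x ∈ closure S₁) (hx₂ : x ∈ closure S₂) : x ∉ closure S₃ := by
  intro hx₃
  obtain ⟨U, hUC, V, hVU, -, hV, hxV, hle, -⟩ := h C hC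
  obtain ⟨a, haV, ha⟩ := mem_closure_iff.1 hx₁ V hV hxV
  obtain ⟨b, hbV, hb⟩ := mem_closure_iff.1 hx₂ V hV hxV
  obtain ⟨c, hcV, hc⟩ := mem_closure_iff.1 hx₃ V hV hxV
  have haQ : a ∉ Q := (hS.subset (Or.inl (Or.inl ha))).2
  have hbQ : b ∉ Q := (hS.subset (Or.inl (Or.inr hb))).2
  have hcQ : c ∉ Q := (hS.subset (Or.inr hc)).2
  have hUS : U \ Q ⊆ S₁ ∪ S₂ ∪ S₃ := hS ▸ sdiff_subset_sdiff_left hUC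
  have hcc₁ : connectedComponentIn (U \ Q) a ⊆ S₁ :=
    connectedComponentIn_subset_of_subset_union h₁ (h₂.union h₃)
      (disjoint_union_right.2 ⟨h₁₂, h₁₃⟩) (by rwa [← union_assoc]) ⟨hVU haV, haQ⟩ ha
  have hcc₂ : connectedComponentIn (U \ Q) b ⊆ S₂ :=
    connectedComponentIn_subset_of_subset_union h₂ (h₁.union h₃)
      (disjoint_union_right.2 ⟨h₁₂.symm, h₂₃⟩) (by rwa [← union_assoc, union_comm S₂])
      ⟨hVU hbV, hbQ⟩ hb
  rcases hle a ⟨haV, haQ⟩ b ⟨hbV, hbQ⟩ c ⟨hcV, hcQ⟩ with hab | hbc | hac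
  · exact disjoint_left.1 h₁₂ (hcc₁ hab) hb
  · exact disjoint_left.1 h₂₃ (hcc₂ hbc) hc
  · exact disjoint_left.1 h₁₃ (hcc₁ hac) hc

lemma IsTwoSidedAt.eventually_mem_closure (h : IsTwoSidedAt Q x) (h₁ : IsOpen S₁) (h₂ : IsOpen S₂)
    (h₁₂ : Disjoint S₁ S₂) (hS : S₁ ∪ S₂ = Qᶜ) (hx₁ : x ∈ closure S₁) :
    ∀ᶠ y in nhds x, y ∈ Q → y ∈ closure S₁ := by
  obtain ⟨U, -, V, hVU, -, hV, hxV, hle, hne⟩ := h univ Filter.univ_mem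
  obtain ⟨a, haV, ha⟩ := mem_closure_iff.1 hx₁ V hV hxV
  have haQ : a ∉ Q := hS.subset (Or.inl ha)
  have hUS : U \ Q ⊆ S₂ ∪ S₁ := fun u hu => union_comm S₁ S₂ ▸ hS ▸ hu.2
  have hcc (b) (hb : b ∈ V \ Q) (hb₂ : b ∈ S₂) : a ∉ connectedComponentIn (U \ Q) b := fun hab =>
    disjoint_left.1 h₁₂ ha (connectedComponentIn_subset_of_subset_union h₂ h₁ h₁₂.symm hUS
      ⟨hVU hb.1, hb.2⟩ hb₂ hab)
  filter_upwards [hV.mem_nhds hxV] with y hyV hyQ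
  rw [mem_closure_iff_nhds]
  intro O hO
  obtain ⟨p, hp, q, hq, hpq⟩ := hne y ⟨hyV, hyQ⟩ O hO
  rcases hS.superset hp.2 with hp₁ | hp₂
  · exact ⟨p, hp.1.1, hp₁⟩
  rcases hS.superset hq.2 with hq₁ | hq₂
  · exact ⟨q, hq.1.1, hq₁⟩
  rcases hle p ⟨hp.1.2, hp.2⟩ q ⟨hq.1.2, hq.2⟩ a ⟨haV, haQ⟩ with h | h | h
  · exact absurd h hpq
  · exact absurd h (hcc q ⟨hq.1.2, hq.2⟩ hq₂)
  · exact absurd h (hcc p ⟨hp.1.2, hp.2⟩ hp₂)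

lemma nonempty_inter_closure_of_sdiff_subset_union (hC : IsPreconnected C) (h₁ : IsOpen S₁)
    (h₂ : IsOpen S₂) (h₁₂ : Disjoint S₁ S₂) (hS : C \ Q ⊆ S₁ ∪ S₂) (hC₁ : (C ∩ S₁).Nonempty)
    (hC₂ : (C ∩ S₂).Nonempty) : (C ∩ Q ∩ closure S₁).Nonempty := by
  by_contra! hempty
  have hsub : C ⊆ S₁ := by
    refine hC.subset_of_closure_inter_subset h₁ hC₁ fun x hx => ?_
    have hxQ : x ∉ Q := fun h => (hempty.subset ⟨⟨hx.2, h⟩, hx.1⟩ : x ∈ (∅ : Set X))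
    exact (hS ⟨hx.2, hxQ⟩).resolve_right (disjoint_left.1 (h₁₂.closure_left h₂) hx.1)
  obtain ⟨x, hxC, hx₂⟩ := hC₂
  exact disjoint_left.1 h₁₂ (hsub hxC) hx₂

variable (hQ : ∀ x ∈ Q, IsTwoSidedAt Q x) (h₁ : IsOpen S₁) (h₂ : IsOpen S₂)
  (h₁₂ : Disjoint S₁ S₂) (hS : S₁ ∪ S₂ = Qᶜ)
include hQ h₁ h₂ h₁₂ hS

theorem subset_closure_inter_closure_of_isTwoSidedAt [PreconnectedSpace X]
    (hconn : IsPreconnected Q) (hne₁ : S₁.Nonempty) (hne₂ : S₂.Nonempty) :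
    Q ⊆ closure S₁ ∩ closure S₂ := by
  have hcover : univ ⊆ closure S₁ ∪ closure S₂ := by
    intro x _
    rw [← closure_union, hS]
    by_cases hx : x ∈ Q
    exacts [(hQ x hx).mem_closure_compl hx, subset_closure hx]
  obtain ⟨x₀, -, hx₀⟩ := isPreconnected_closed_iff.1 isPreconnected_univ _ _ isClosed_closure
    isClosed_closure hcover (by simpa using hne₁) (by simpa using hne₂)
  have hx₀Q : x₀ ∈ Q := by
    by_contra hx
    rcases hS.superset hx with h | h
    exacts [disjoint_left.1 (h₁₂.closure_right h₁) h hx₀.2,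
      disjoint_left.1 (h₁₂.closure_left h₂) hx₀.1 h]
  have hopen : Q ∩ (closure S₁ ∩ closure S₂) ⊆
      interior (Qᶜ ∪ (closure S₁ ∩ closure S₂)) := by
    rintro x ⟨hx, hx₁, hx₂⟩
    rw [mem_interior_iff_mem_nhds]
    filter_upwards [(hQ x hx).eventually_mem_closure h₁ h₂ h₁₂ hS hx₁,
      (hQ x hx).eventually_mem_closure h₂ h₁ h₁₂.symm (by rwa [union_comm]) hx₂] with y hy₁ hy₂
    by_cases hy : y ∈ Q
    exacts [Or.inr ⟨hy₁ hy, hy₂ hy⟩, Or.inl hy]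
  have hunion : Q ⊆ interior (Qᶜ ∪ (closure S₁ ∩ closure S₂)) ∪ (closure S₁ ∩ closure S₂)ᶜ := by
    intro x hx
    by_cases hxS : x ∈ closure S₁ ∩ closure S₂
    exacts [Or.inl (hopen ⟨hx, hxS⟩), Or.inr hxS]
  have hinter : Q ∩ (interior (Qᶜ ∪ (closure S₁ ∩ closure S₂)) ∩
      (closure S₁ ∩ closure S₂)ᶜ) = ∅ := by
    rw [eq_empty_iff_forall_notMem]
    rintro x ⟨hx, hx', hxS⟩
    exact (interior_subset hx').elim (fun h => h hx) hxS
  rcases isPreconnected_iff_subset_of_disjoint.1 hconn (interior (Qᶜ ∪ (closure S₁ ∩ closure S₂)))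
    (closure S₁ ∩ closure S₂)ᶜ isOpen_interior
    (isClosed_closure.inter isClosed_closure).isOpen_compl hunion hinter with h | h
  · exact fun x hx => (interior_subset (h hx)).resolve_left fun hx' => hx' hx
  · exact absurd hx₀ (h hx₀Q)

theorem isPreconnected_inter_of_isTwoSidedAt (hcl₁ : Q ⊆ closure S₁) (hcl₂ : Q ⊆ closure S₂)
    (hC : IsPreconnected C) (hCo : IsOpen C) (hCQ : IsPreconnected (C ∩ Q)) :
    IsPreconnected (C ∩ S₁) := by
  rw [isPreconnected_iff_subset_of_disjoint]
  intro u v hu hv huv hdisj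
  by_contra! hcon
  set A := C ∩ S₁ ∩ u
  set B := C ∩ S₁ ∩ v
  have hAB : A ∪ B = C ∩ S₁ := by rw [← inter_union_distrib_left, inter_eq_left.2 huv]
  have hAo : IsOpen A := (hCo.inter h₁).inter hu
  have hBo : IsOpen B := (hCo.inter h₁).inter hv
  have hdAB : Disjoint A B := disjoint_left.2 fun x hxu hxv =>
    (hdisj.subset ⟨hxu.1, hxu.2, hxv.2⟩ : x ∈ (∅ : Set X))
  have hne {D : Set X} {w : Set X} (hD : C ∩ S₁ ∩ w ∪ D = C ∩ S₁) (hw : ¬ C ∩ S₁ ⊆ w) :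
      D.Nonempty := by
    obtain ⟨x, hx, hxw⟩ := not_subset.1 hw
    exact ⟨x, (hD.superset hx).resolve_left fun h => hxw h.2⟩
  have hAne : A.Nonempty := hne (union_comm A B ▸ hAB) hcon.2
  have hBne : B.Nonempty := hne hAB hcon.1
  have hunion : A ∪ B ∪ C ∩ S₂ = C \ Q := by
    rw [hAB, ← inter_union_distrib_left, hS, sdiff_eq]
  have hCS₂o : IsOpen (C ∩ S₂) := hCo.inter h₂
  have hdS₂ (w : Set X) : Disjoint (C ∩ S₁ ∩ w) (C ∩ S₂) :=
    h₁₂.mono (inter_subset_left.trans inter_subset_right) inter_subset_right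
  have hclA : (C ∩ Q ∩ closure A).Nonempty :=
    nonempty_inter_closure_of_sdiff_subset_union hC hAo (hBo.union hCS₂o)
      (disjoint_union_right.2 ⟨hdAB, hdS₂ u⟩) (by rw [← union_assoc, hunion])
      (hAne.mono fun x hx => ⟨hx.1.1, hx⟩) (hBne.mono fun x hx => ⟨hx.1.1, Or.inl hx⟩)
  have hclB : (C ∩ Q ∩ closure B).Nonempty :=
    nonempty_inter_closure_of_sdiff_subset_union hC hBo (hAo.union hCS₂o)
      (disjoint_union_right.2 ⟨hdAB.symm, hdS₂ v⟩)
      (by rw [← union_assoc, union_comm B, hunion])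
      (hBne.mono fun x hx => ⟨hx.1.1, hx⟩) (hAne.mono fun x hx => ⟨hx.1.1, Or.inl hx⟩)
  have hcover : C ∩ Q ⊆ closure A ∪ closure B := by
    rw [← closure_union, hAB]
    exact (inter_subset_inter_right C hcl₁).trans hCo.inter_closure
  obtain ⟨x, hx, hxA, hxB⟩ := isPreconnected_closed_iff.1 hCQ _ _ isClosed_closure
    isClosed_closure hcover hclA hclB
  have hxS₂ : x ∈ closure (C ∩ S₂) := hCo.inter_closure ⟨hx.1, hcl₂ hx.2⟩
  exact (hQ x hx.2).notMem_closure_of_union_eq (hCo.mem_nhds hx.1) hAo hBo hCS₂o hdAB (hdS₂ u)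
    (hdS₂ v) hunion hxA hxB hxS₂

end Separation

/-! ### Simanifolds -/

lemma isPreconnected_preimage_val_iff {X : Type*} [TopologicalSpace X] {s t : Set X} :
    IsPreconnected (Subtype.val ⁻¹' t : Set s) ↔ IsPreconnected (s ∩ t) := by
  rw [← Topology.IsInducing.subtypeVal.isPreconnected_image, Subtype.image_preimage_coe]

namespace IsSimanifold

variable {N i d : ℕ} {S Y O : Set (Euc N)}

lemma isPreconnected (h : IsSimanifold d S) : IsPreconnected S := by
  obtain ⟨-, hS, -⟩ := h
  exact isPreconnected_iff_preconnectedSpace.2 inferInstance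

lemma le (h : IsSimanifold i S) (hY : IsSimanifold d Y) (hSY : S ⊆ Y) : i ≤ d := by
  obtain ⟨hne, -, ⟨hS⟩⟩ := h
  obtain ⟨-, -, ⟨hY⟩⟩ := hY
  have : Nonempty S := hne.to_subtype
  exact le_of_continuous_of_injective (continuous_inclusion hSY) (inclusion_injective hSY)

lemma of_homeomorph_openBox {lo hi : Fin d → ℝ} (hne : (openBox lo hi).Nonempty)
    (f : openBox lo hi ≃ₜ S) : IsSimanifold d S := by
  have hS : Nonempty S := f.toEquiv.nonempty_congr.1 hne.to_subtype
  have : ContractibleSpace (openBox lo hi) :=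
    (convex_pi fun i _ => convex_Ioo (lo i) (hi i)).contractibleSpace hne
  refine ⟨nonempty_coe_sort.1 hS, f.symm.contractibleSpace, ⟨?_⟩⟩
  exact ((EuclideanSpace.equiv (Fin d) ℝ).symm.toHomeomorph.isOpenEmbedding.comp
    (isOpen_openBox.isOpenEmbedding_subtypeVal.comp f.symm.isOpenEmbedding)).singletonChartedSpace

lemma exists_isSimanifold_subset_inter (hY : IsSimanifold d Y) (hO : IsOpen O)
    (hne : (Y ∩ O).Nonempty) : ∃ S ⊆ Y ∩ O, IsSimanifold d S := by
  obtain ⟨-, -, ⟨hchart⟩⟩ := hY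
  obtain ⟨x, hxY, hxO⟩ := hne
  obtain ⟨Φ, lo, hi, c, hc, -, hsource, hmaps⟩ := exists_box_chart (k := d) (⟨x, hxY⟩ : Y)
    ((hO.preimage continuous_subtype_val).mem_nhds hxO)
  refine ⟨Subtype.val '' (Φ '' openBox lo hi), ?_, of_homeomorph_openBox ⟨c, hc⟩
    ((Φ.homeomorphOfImageSubsetSource (openBox_subset_Icc.trans hsource) rfl).trans
      (Topology.IsEmbedding.subtypeVal.homeomorphImage _))⟩
  rintro _ ⟨_, ⟨y, hy, rfl⟩, rfl⟩
  exact ⟨(Φ y).2, hmaps (openBox_subset_Icc hy)⟩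

theorem sdim_inter_eq (hY : IsSimanifold d Y) (hO : IsOpen O) (hne : (Y ∩ O).Nonempty) :
    sdim (Y ∩ O) = d := by
  obtain ⟨S, hSY, hS⟩ := hY.exists_isSimanifold_subset_inter hO hne
  refine IsGreatest.csSup_eq ⟨⟨S, hS, hSY⟩, ?_⟩
  rintro i ⟨S', hS', hsub⟩
  exact hS'.le hY (hsub.trans inter_subset_left)

lemma sdim_eq (h : IsSimanifold d S) : sdim S = d := by
  simpa using h.sdim_inter_eq isOpen_univ (by simpa using h.1)

lemma isTwoSidedAt_preimage_val {k : ℕ} {Q : Set (Euc N)} (hY : IsSimanifold (k + 1) Y)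
    (hQ : IsSimanifold k Q) (hQY : Q ⊆ Y) {x : Y} (hx : ↑x ∈ Q) :
    IsTwoSidedAt (Subtype.val ⁻¹' Q : Set Y) x := by
  obtain ⟨-, -, ⟨hchartY⟩⟩ := hY
  obtain ⟨-, -, ⟨hchartQ⟩⟩ := hQ
  have := isTwoSidedAt_range_of_isEmbedding (k := k) (Topology.IsEmbedding.inclusion hQY) ⟨x, hx⟩
  rwa [range_inclusion] at this

section Cut

variable {k : ℕ} {Q O₁ O₂ : Set (Euc N)} (hY : IsSimanifold (k + 1) Y) (hQ : IsSimanifold k Q)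
  (hQY : Q ⊆ Y) (h₁ : IsOpen O₁) (h₂ : IsOpen O₂) (hd : Disjoint (Y ∩ O₁) (Y ∩ O₂))
  (hQO : Y ∩ O₁ ∪ Y ∩ O₂ = Y \ Q) (hne₁ : (Y ∩ O₁).Nonempty) (hne₂ : (Y ∩ O₂).Nonempty)

include hd in
lemma disjoint_preimage_val :
    Disjoint (Subtype.val ⁻¹' O₁ : Set Y) (Subtype.val ⁻¹' O₂) :=
  disjoint_left.2 fun x hx₁ hx₂ => disjoint_left.1 hd ⟨x.2, hx₁⟩ ⟨x.2, hx₂⟩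

include hQO in
lemma union_preimage_val : (Subtype.val ⁻¹' O₁ ∪ Subtype.val ⁻¹' O₂ : Set Y) =
    (Subtype.val ⁻¹' Q)ᶜ := by
  ext x
  simpa using Set.ext_iff.1 hQO x

include hY hQ hQY h₁ h₂ hd hQO hne₁ hne₂

lemma preimage_val_subset_closure : (Subtype.val ⁻¹' Q : Set Y) ⊆
    closure (Subtype.val ⁻¹' O₁) ∩ closure (Subtype.val ⁻¹' O₂) := by
  have : PreconnectedSpace Y := isPreconnected_iff_preconnectedSpace.1 hY.isPreconnected
  obtain ⟨x₁, hx₁⟩ := hne₁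
  obtain ⟨x₂, hx₂⟩ := hne₂
  exact subset_closure_inter_closure_of_isTwoSidedAt
    (fun x hx => hY.isTwoSidedAt_preimage_val hQ hQY hx)
    (h₁.preimage continuous_subtype_val) (h₂.preimage continuous_subtype_val)
    (disjoint_preimage_val hd) (union_preimage_val hQO)
    (isPreconnected_preimage_val_iff.2 (by rw [inter_eq_right.2 hQY]; exact hQ.isPreconnected))
    ⟨⟨x₁, hx₁.1⟩, hx₁.2⟩ ⟨⟨x₂, hx₂.1⟩, hx₂.2⟩

theorem nonempty_inter_of_cut (hO : IsOpen O) (hne : (Y ∩ O ∩ Q).Nonempty) :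
    (Y ∩ O ∩ O₁).Nonempty := by
  obtain ⟨x, ⟨hxY, hxO⟩, hxQ⟩ := hne
  have hx := (preimage_val_subset_closure hY hQ hQY h₁ h₂ hd hQO hne₁ hne₂
    (show (⟨x, hxY⟩ : Y) ∈ Subtype.val ⁻¹' Q from hxQ)).1
  obtain ⟨y, hyO, hy₁⟩ := mem_closure_iff.1 hx _ (hO.preimage continuous_subtype_val) hxO
  exact ⟨y, ⟨y.2, hyO⟩, hy₁⟩

theorem isPreconnected_inter_of_cut (hO : IsOpen O) (hC : IsPreconnected (Y ∩ O))
    (hCQ : IsPreconnected (Y ∩ O ∩ Q)) : IsPreconnected (Y ∩ O ∩ O₁) := by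
  have hcl := preimage_val_subset_closure hY hQ hQY h₁ h₂ hd hQO hne₁ hne₂
  rw [inter_assoc, ← isPreconnected_preimage_val_iff, preimage_inter] at hCQ ⊢
  exact isPreconnected_inter_of_isTwoSidedAt
    (fun x hx => hY.isTwoSidedAt_preimage_val hQ hQY hx) (h₁.preimage continuous_subtype_val)
    (h₂.preimage continuous_subtype_val) (disjoint_preimage_val hd) (union_preimage_val hQO)
    (fun x hx => (hcl hx).1) (fun x hx => (hcl hx).2) (isPreconnected_preimage_val_iff.2 hC)
    (hO.preimage continuous_subtype_val) hCQ

end Cut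

end IsSimanifold

/-! ### Dehyperplane arrangements -/

namespace Dehyperplane

variable {N n : ℕ} {T C X : Set (Euc N)} (P : Dehyperplane N n T) {s ε : SignType}

lemma disjoint_part (h : s ≠ ε) : Disjoint (P.part s) (P.part ε) := by
  have h₁ := P.disj_pP
  have h₂ := P.disj_pm
  have h₃ := P.disj_Pm
  cases s <;> cases ε <;> first | exact absurd rfl h | assumption | (symm; assumption)

lemma mem_part_trichotomy (hs : s ≠ 0) {x : Euc N} (hx : x ∈ T) :
    x ∈ P.part s ∨ x ∈ P.P ∨ x ∈ P.part (-s) := by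
  rw [← P.union_eq] at hx
  cases s
  · exact absurd rfl hs
  · rcases hx with (hx | hx) | hx
    exacts [.inr (.inr hx), .inr (.inl hx), .inl hx]
  · rcases hx with (hx | hx) | hx
    exacts [.inl hx, .inr (.inl hx), .inr (.inr hx)]

lemma closure_part_inter_closure_part_neg (hs : s ≠ 0) :
    closure (P.part s) ∩ closure (P.part (-s)) = P.P := by
  cases s
  · exact absurd rfl hs
  · exact (inter_comm _ _).trans P.closure_eq
  · exact P.closure_eq

lemma inter_part_eq (hX : X ⊆ T) (hs : s ≠ 0) :
    X ∩ P.part s = X ∩ (closure (P.part (-s)))ᶜ := by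
  have hcl := P.closure_part_inter_closure_part_neg hs
  ext x
  refine and_congr_right fun hx => ⟨fun hxs hx' => ?_, fun hx' => ?_⟩
  · exact disjoint_left.1 (P.disjoint_part hs) hxs (hcl.subset ⟨subset_closure hxs, hx'⟩)
  · rcases P.mem_part_trichotomy hs (hX hx) with h | h | h
    · exact h
    · exact absurd (hcl.superset h).2 hx'
    · exact absurd (subset_closure h) hx'

lemma inter_part_union_inter_part_neg (hX : X ⊆ T) (hs : s ≠ 0) :
    X ∩ P.part s ∪ X ∩ P.part (-s) = X \ P.P := by
  rw [← inter_union_distrib_left]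
  refine Subset.antisymm (fun x ⟨hx, hxs⟩ => ⟨hx, fun hx₀ => ?_⟩) fun x ⟨hx, hx₀⟩ => ⟨hx, ?_⟩
  · exact hxs.elim (fun h => disjoint_left.1 (P.disjoint_part (ε := 0) hs) h hx₀)
      fun h => disjoint_left.1 (P.disjoint_part (ε := 0) (by simpa using hs)) h hx₀
  · exact (P.mem_part_trichotomy hs (hX hx)).imp_right fun h => h.resolve_left hx₀

lemma exists_subset_part_of_isPreconnected (hC : IsPreconnected C) (hCT : C ⊆ T)
    (hCP : C ∩ P.P = ∅) : ∃ ε, C ⊆ P.part ε := by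
  have hcover : C ⊆ P.part 1 ∪ P.part (-1) := fun x hx =>
    (P.mem_part_trichotomy (by decide) (hCT hx)).imp_right fun h =>
      h.resolve_left fun hxP => hCP.subset ⟨hx, hxP⟩
  have hpos := P.inter_part_eq (s := 1) hCT (by decide)
  have hneg := P.inter_part_eq (s := -1) hCT (by decide)
  rcases isPreconnected_iff_subset_of_disjoint.1 hC _ _
    (isClosed_closure (s := P.part (-1))).isOpen_compl
    (isClosed_closure (s := P.part 1)).isOpen_compl
    (fun x hx => (hcover hx).imp (fun h => (hpos.subset ⟨hx, h⟩).2)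
      fun h => (hneg.subset ⟨hx, h⟩).2)
    (eq_empty_of_forall_notMem fun x ⟨hx, h₁, h₂⟩ => (hcover hx).elim
      (fun h => h₂ (subset_closure h)) fun h => h₁ (subset_closure h)) with h | h
  · exact ⟨1, fun x hx => (hpos.superset ⟨hx, h hx⟩).2⟩
  · exact ⟨-1, fun x hx => (hneg.superset ⟨hx, h hx⟩).2⟩

end Dehyperplane

section Flats

variable {N n : ℕ} {T X Y O : Set (Euc N)} {A B : Set (Dehyperplane N n T)}

lemma subset_of_mem_flats (hX : X ∈ flats A) : X ⊆ T := by
  obtain ⟨-, B, -, rfl⟩ := hX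
  exact inter_subset_left

lemma self_mem_flats (hT : T.Nonempty) : T ∈ flats A :=
  ⟨hT, ∅, empty_subset A, by simp⟩

lemma inter_biInter_mem_flats (hX : X ∈ flats A) (hB : B ⊆ A)
    (hne : (X ∩ ⋂ P ∈ B, P.P).Nonempty) : X ∩ ⋂ P ∈ B, P.P ∈ flats A := by
  obtain ⟨-, B', hB', rfl⟩ := hX
  exact ⟨hne, B' ∪ B, union_subset hB' hB, by rw [biInter_union, inter_assoc]⟩

lemma finite_flats (hA : A.Finite) : (flats A).Finite := by
  refine (hA.finite_subsets.image fun B => T ∩ ⋂ P ∈ B, P.P).subset ?_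
  rintro X ⟨-, B, hB, rfl⟩
  exact ⟨B, hB, rfl⟩

namespace IsDA

variable {P : Dehyperplane N n T}

lemma exists_isSimanifold (hA : IsDA n T A) (hT : IsSimanifold n T) (hX : X ∈ flats A) :
    ∃ d ≤ n, IsSimanifold d X := by
  obtain ⟨hne, B, hB, rfl⟩ := hX
  induction B, hA.1.subset hB using Set.Finite.induction_on with
  | empty => exact ⟨n, le_rfl, by simpa using hT⟩
  | @insert P B _ _ ih =>
    rw [biInter_insert, inter_left_comm] at hne ⊢
    have hB' : B ⊆ A := (subset_insert P B).trans hB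
    have hne' := hne.mono inter_subset_right
    rcases hA.2 P (hB (mem_insert P B)) _ ⟨hne', B, hB', rfl⟩ hne with h | ⟨i, -, hin, h, -, -⟩
    · rw [inter_eq_right.2 h]
      exact ih hB' hne'
    · exact ⟨i - 1, by omega, h⟩

-- The definition does not say that the `i` it provides is the dimension of `X`: it is the
-- dimension of the nonempty open subset `X ∩ P.plus` of `X`.
lemma exists_isSimanifold_inter (hA : IsDA n T A) (hT : IsSimanifold n T) (hX : X ∈ flats A)
    (hP : P ∈ A) (hne : (X ∩ P.P).Nonempty) (hXP : ¬X ⊆ P.P) :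
    ∃ k, IsSimanifold (k + 1) X ∧ IsSimanifold k (X ∩ P.P) ∧
      ∀ s ≠ 0, (X ∩ P.part s).Nonempty := by
  obtain ⟨d, -, hd⟩ := hA.exists_isSimanifold hT hX
  rw [inter_comm] at hne
  obtain ⟨i, hi, -, hk, hplus, hminus⟩ := (hA.2 P hP X hX hne).resolve_left hXP
  rw [inter_comm] at hk hplus hminus
  have hopen : X ∩ P.plus = X ∩ (closure P.minus)ᶜ :=
    P.inter_part_eq (s := 1) (subset_of_mem_flats hX) (by decide)
  have hdi : d = i := by
    rw [← hplus.sdim_eq, hopen,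
      hd.sdim_inter_eq isClosed_closure.isOpen_compl (hopen ▸ hplus.1)]
  refine ⟨i - 1, by rwa [Nat.sub_add_cancel hi, ← hdi], hk, ?_⟩
  rintro (_ | _ | _) hs
  exacts [absurd rfl hs, hminus.1, hplus.1]

lemma nonempty_and_isPreconnected_inter_part (hA : IsDA n T A) (hT : IsSimanifold n T)
    (hY : Y ∈ flats A) (hP : P ∈ A) (hO : IsOpen O) (hne : (Y ∩ O ∩ P.P).Nonempty)
    (hYP : ¬Y ⊆ P.P) {s : SignType} (hs : s ≠ 0) :
    (Y ∩ O ∩ P.part s).Nonempty ∧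
      (IsPreconnected (Y ∩ O) → IsPreconnected (Y ∩ O ∩ P.P) →
        IsPreconnected (Y ∩ O ∩ P.part s)) := by
  have hYT := subset_of_mem_flats hY
  obtain ⟨k, hYk, hQk, hparts⟩ := hA.exists_isSimanifold_inter hT hY hP
    (hne.mono (inter_subset_inter_left _ inter_subset_left)) hYP
  have hs' : -s ≠ 0 := by simpa using hs
  have e₁ := P.inter_part_eq hYT hs
  have e₂ := P.inter_part_eq hYT hs'
  have hd : Disjoint (Y ∩ P.part s) (Y ∩ P.part (-s)) :=
    (P.disjoint_part (mt SignType.self_eq_neg_iff.1 hs)).mono inter_subset_right inter_subset_right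
  have hQO := P.inter_part_union_inter_part_neg hYT hs
  have hne₁ := hparts s hs
  have hne₂ := hparts (-s) hs'
  have eC : Y ∩ O ∩ P.part s = Y ∩ O ∩ (closure (P.part (-s)))ᶜ := by
    rw [inter_right_comm, e₁, inter_right_comm]
  have eQ : Y ∩ O ∩ P.P = Y ∩ O ∩ (Y ∩ P.P) := by
    rw [← inter_inter_distrib_left, inter_assoc]
  rw [e₁] at hne₁ hd hQO
  rw [e₂] at hne₂ hd hQO
  rw [← sdiff_self_inter] at hQO
  rw [eQ] at hne ⊢
  rw [eC]
  exact ⟨hYk.nonempty_inter_of_cut hQk inter_subset_left isClosed_closure.isOpen_compl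
      isClosed_closure.isOpen_compl hd hQO hne₁ hne₂ hO hne,
    hYk.isPreconnected_inter_of_cut hQk inter_subset_left isClosed_closure.isOpen_compl
      isClosed_closure.isOpen_compl hd hQO hne₁ hne₂ hO⟩

lemma isPreconnected_inter_part (hA : IsDA n T A) (hT : IsSimanifold n T) (hY : Y ∈ flats A)
    (hP : P ∈ A) (hO : IsOpen O) (hC : IsPreconnected (Y ∩ O))
    (hCP : IsPreconnected (Y ∩ O ∩ P.P)) (s : SignType) :
    IsPreconnected (Y ∩ O ∩ P.part s) := by
  by_cases hε : ∃ ε, Y ∩ O ⊆ P.part ε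
  · obtain ⟨ε, hε⟩ := hε
    rcases eq_or_ne ε s with rfl | hεs
    · rwa [inter_eq_left.2 hε]
    · rw [((P.disjoint_part hεs).mono_left hε).inter_eq]
      exact isPreconnected_empty
  rcases eq_or_ne s 0 with rfl | hs
  · exact hCP
  have hne : (Y ∩ O ∩ P.P).Nonempty := nonempty_iff_ne_empty.2 fun h =>
    hε (P.exists_subset_part_of_isPreconnected hC
      (inter_subset_left.trans (subset_of_mem_flats hY)) h)
  exact (hA.nonempty_and_isPreconnected_inter_part hT hY hP hO hne
    (fun h => hε ⟨0, inter_subset_left.trans h⟩) hs).2 hC hCP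

end IsDA

end Flats

/-! ### The Euler relation -/

/-- A piece of a dehyperplane arrangement `A`: a nonempty relatively open subset of a flat whose
intersection with every flat is connected. These are the sets that arise from flats when they are
cut by elements of `A`. -/
structure IsPiece {N n : ℕ} {T : Set (Euc N)} (A : Set (Dehyperplane N n T))
    (C : Set (Euc N)) : Prop where
  exists_eq_inter : ∃ Y ∈ flats A, ∃ O, IsOpen O ∧ C = Y ∩ O
  nonempty : C.Nonempty
  isPreconnected_inter : ∀ B ⊆ A, IsPreconnected (C ∩ ⋂ P ∈ B, P.P)

section Piece

variable {N n : ℕ} {T X C : Set (Euc N)} {A B : Set (Dehyperplane N n T)}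
  {P : Dehyperplane N n T}

lemma IsDA.isPiece (hA : IsDA n T A) (hT : IsSimanifold n T) (hX : X ∈ flats A) :
    IsPiece A X where
  exists_eq_inter := ⟨X, hX, univ, isOpen_univ, (inter_univ X).symm⟩
  nonempty := hX.1
  isPreconnected_inter B hB := by
    rcases (X ∩ ⋂ P ∈ B, P.P).eq_empty_or_nonempty with h | h
    · rw [h]
      exact isPreconnected_empty
    · obtain ⟨d, -, hd⟩ := hA.exists_isSimanifold hT (inter_biInter_mem_flats hX hB h)
      exact hd.isPreconnected

namespace IsPiece

lemma subset (h : IsPiece A C) : C ⊆ T := by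
  obtain ⟨Y, hY, O, -, rfl⟩ := h.exists_eq_inter
  exact inter_subset_left.trans (subset_of_mem_flats hY)

lemma isPreconnected (h : IsPiece A C) : IsPreconnected C := by
  simpa using h.isPreconnected_inter ∅ (empty_subset A)

lemma inter_part (hA : IsDA n T A) (hT : IsSimanifold n T) (h : IsPiece A C) (hP : P ∈ A)
    {s : SignType} (hne : (C ∩ P.part s).Nonempty) : IsPiece A (C ∩ P.part s) := by
  have hCT := h.subset
  obtain ⟨Y, hY, O, hO, rfl⟩ := h.exists_eq_inter
  refine ⟨?_, hne, fun B hB => ?_⟩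
  · rcases eq_or_ne s 0 with rfl | hs
    · refine ⟨Y ∩ P.P, ?_, O, hO, inter_right_comm _ _ _⟩
      have hYP : (Y ∩ P.P).Nonempty := hne.mono (inter_subset_inter_left _ inter_subset_left)
      simpa using inter_biInter_mem_flats (B := {P}) hY (by simpa using hP) (by simpa using hYP)
    · exact ⟨Y, hY, O ∩ (closure (P.part (-s)))ᶜ, hO.inter isClosed_closure.isOpen_compl,
        by rw [P.inter_part_eq hCT hs, inter_assoc]⟩
  · rw [inter_right_comm, inter_right_comm Y]
    rcases (Y ∩ ⋂ P ∈ B, P.P).eq_empty_or_nonempty with hempty | hYB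
    · simpa [hempty] using isPreconnected_empty
    have hYBP := h.isPreconnected_inter (insert P B) (insert_subset hP hB)
    rw [biInter_insert, inter_comm P.P, ← inter_assoc, inter_right_comm Y] at hYBP
    refine hA.isPreconnected_inter_part hT (inter_biInter_mem_flats hY hB hYB) hP hO ?_ hYBP s
    rw [inter_right_comm]
    exact h.isPreconnected_inter B hB

lemma sdim_inter_part (hA : IsDA n T A) (hT : IsSimanifold n T) (h : IsPiece A C)
    {s : SignType} (hs : s ≠ 0) (hne : (C ∩ P.part s).Nonempty) :
    sdim (C ∩ P.part s) = sdim C := by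
  have hCne := h.nonempty
  have hCT := h.subset
  obtain ⟨Y, hY, O, hO, rfl⟩ := h.exists_eq_inter
  obtain ⟨d, -, hd⟩ := hA.exists_isSimanifold hT hY
  rw [P.inter_part_eq hCT hs, inter_assoc] at hne ⊢
  rw [hd.sdim_inter_eq hO hCne, hd.sdim_inter_eq (hO.inter isClosed_closure.isOpen_compl) hne]

lemma subset_part_or_cut (hA : IsDA n T A) (hT : IsSimanifold n T) (h : IsPiece A C)
    (hP : P ∈ A) : (∃ s, C ⊆ P.part s) ∨
      (∀ s, (C ∩ P.part s).Nonempty) ∧ sdim C = sdim (C ∩ P.P) + 1 := by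
  refine or_iff_not_imp_left.2 fun hsub => ?_
  have hCP : (C ∩ P.P).Nonempty := nonempty_iff_ne_empty.2 fun hCP =>
    hsub (P.exists_subset_part_of_isPreconnected h.isPreconnected h.subset hCP)
  have hCne := h.nonempty
  obtain ⟨Y, hY, O, hO, rfl⟩ := h.exists_eq_inter
  have hYP : ¬Y ⊆ P.P := fun hYP => hsub ⟨0, inter_subset_left.trans hYP⟩
  refine ⟨fun s => ?_, ?_⟩
  · rcases eq_or_ne s 0 with rfl | hs
    · exact hCP
    · exact (hA.nonempty_and_isPreconnected_inter_part hT hY hP hO hCP hYP hs).1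
  · obtain ⟨k, hYk, hQk, -⟩ := hA.exists_isSimanifold_inter hT hY hP
      (hCP.mono (inter_subset_inter_left _ inter_subset_left)) hYP
    rw [hYk.sdim_inter_eq hO hCne]
    rw [inter_right_comm] at hCP ⊢
    rw [hQk.sdim_inter_eq hO hCP]

end IsPiece

end Piece

/-- The faces into which the elements of `B` cut `C`. With `C = T` these are the faces of the
arrangement `B`. -/
def facesIn {N n : ℕ} {T : Set (Euc N)} (B : Set (Dehyperplane N n T)) (C : Set (Euc N)) :
    Set (Set (Euc N)) :=
  {F | F.Nonempty ∧ ∃ ε : Dehyperplane N n T → SignType, F = C ∩ ⋂ P ∈ B, P.part (ε P)}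

section FacesIn

variable {N n : ℕ} {T C : Set (Euc N)} {A B : Set (Dehyperplane N n T)}
  {P : Dehyperplane N n T}

lemma facesIn_empty_left (hC : C.Nonempty) :
    facesIn (∅ : Set (Dehyperplane N n T)) C = {C} := by
  ext F
  simp only [facesIn, biInter_empty, inter_univ, exists_const, mem_ofPred_eq, mem_singleton_iff]
  exact ⟨fun h => h.2, fun h => ⟨h ▸ hC, h⟩⟩

lemma facesIn_empty_right : facesIn B ∅ = ∅ := by
  refine eq_empty_of_forall_notMem ?_
  rintro F ⟨hne, ε, rfl⟩
  simp at hne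

lemma subset_of_mem_facesIn {F : Set (Euc N)} (hF : F ∈ facesIn B C) : F ⊆ C := by
  obtain ⟨-, ε, rfl⟩ := hF
  exact inter_subset_left

lemma facesIn_insert (hP : P ∉ B) :
    facesIn (insert P B) C = ⋃ s, facesIn B (C ∩ P.part s) := by
  classical
  ext F
  simp only [facesIn, mem_iUnion, mem_ofPred_eq, biInter_insert, ← inter_assoc]
  refine ⟨fun ⟨hne, ε, hF⟩ => ⟨ε P, hne, ε, hF⟩, fun ⟨s, hne, ε, hF⟩ => ?_⟩
  refine ⟨hne, Function.update ε P s, hF.trans ?_⟩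
  rw [Function.update_self]
  congr 1
  refine iInter₂_congr fun Q hQ => ?_
  rw [Function.update_of_ne (ne_of_mem_of_not_mem hQ hP)]

lemma finite_facesIn (hB : B.Finite) : (facesIn B C).Finite := by
  induction B, hB using Set.Finite.induction_on generalizing C with
  | empty =>
    refine (finite_singleton C).subset ?_
    rintro F ⟨-, ε, rfl⟩
    simp
  | insert hP _ ih =>
    rw [facesIn_insert hP]
    exact finite_iUnion fun s => ih

lemma finsum_facesIn_insert (hB : B.Finite) (hP : P ∉ B) (f : Set (Euc N) → ℤ) :
    ∑ᶠ F ∈ facesIn (insert P B) C, f F = ∑ s, ∑ᶠ F ∈ facesIn B (C ∩ P.part s), f F := by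
  rw [facesIn_insert hP, finsum_mem_iUnion _ fun s => finite_facesIn hB,
    finsum_eq_sum_of_fintype]
  intro s s' hss'
  refine disjoint_left.2 fun F hF hF' => ?_
  obtain ⟨x, hx⟩ := hF.1
  exact disjoint_left.1 (P.disjoint_part hss') (subset_of_mem_facesIn hF hx).2
    (subset_of_mem_facesIn hF' hx).2

-- A nontrivial cut of a piece of dimension `d` contributes `(-1) ^ (d - 1) + 2 * (-1) ^ d`.
theorem IsPiece.finsum_neg_one_pow_sdim (hA : IsDA n T A) (hT : IsSimanifold n T)
    (hB : B ⊆ A) (hC : IsPiece A C) :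
    ∑ᶠ F ∈ facesIn B C, (-1 : ℤ) ^ sdim F = (-1) ^ sdim C := by
  induction B, hA.1.subset hB using Set.Finite.induction_on generalizing C with
  | empty => rw [facesIn_empty_left hC.nonempty, finsum_mem_singleton]
  | @insert P B hPB hfin ih =>
    obtain ⟨hP, hB⟩ := insert_subset_iff.1 hB
    have ih' {s} (hne : (C ∩ P.part s).Nonempty) := ih hB (hC.inter_part hA hT hP hne)
    rw [finsum_facesIn_insert hfin hPB]
    rcases hC.subset_part_or_cut hA hT hP with ⟨s, hs⟩ | ⟨hne, hdim⟩
    · rw [Fintype.sum_eq_single s fun s' hs' => ?_, inter_eq_left.2 hs, ih hB hC]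
      rw [((P.disjoint_part hs'.symm).mono_left hs).inter_eq, facesIn_empty_right,
        finsum_mem_empty]
    · simp only [ih' (hne _), SignType.univ_eq]
      rw [Finset.sum_insert (by decide), Finset.sum_insert (by decide), Finset.sum_singleton,
        hC.sdim_inter_part hA hT (s := -1) (by decide) (hne _),
        hC.sdim_inter_part hA hT (s := 1) (by decide) (hne _), hdim, pow_succ]
      change (-1 : ℤ) ^ sdim (C ∩ P.P) + _ = _
      ring

end FacesIn

/-! ### Counting chambers -/

section Chambers

variable {N n : ℕ} {T F X : Set (Euc N)} {A : Set (Dehyperplane N n T)}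

lemma facesIn_eq_of_mem_flats (hX : X ∈ flats A) : facesIn A X = {F ∈ facesIn A T | F ⊆ X} := by
  have hXT := subset_of_mem_flats hX
  ext F
  constructor
  · rintro ⟨⟨x, hx⟩, ε, rfl⟩
    refine ⟨⟨⟨x, hx⟩, ε, (inter_subset_inter_left _ hXT).antisymm fun y hy => ⟨?_, hy.2⟩⟩,
      inter_subset_left⟩
    obtain ⟨-, B, hB, rfl⟩ := hX
    refine ⟨hy.1, mem_iInter₂.2 fun P hP => ?_⟩
    have hε : ε P = 0 := by_contra fun hε => disjoint_left.1 (P.disjoint_part hε)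
      (mem_iInter₂.1 hx.2 P (hB hP)) (mem_iInter₂.1 hx.1.2 P hP)
    have hy' := mem_iInter₂.1 hy.2 P (hB hP)
    rwa [hε] at hy'
  · rintro ⟨⟨hne, ε, rfl⟩, hFX⟩
    exact ⟨hne, ε, Subset.antisymm (fun y hy => ⟨hFX hy, hy.2⟩) (inter_subset_inter_left _ hXT)⟩

theorem IsDA.finsum_neg_one_pow_sdim (hA : IsDA n T A) (hT : IsSimanifold n T)
    (hX : X ∈ flats A) :
    ∑ᶠ F ∈ {F ∈ facesIn A T | F ⊆ X}, (-1 : ℤ) ^ sdim F = (-1) ^ sdim X := by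
  rw [← facesIn_eq_of_mem_flats hX]
  exact (hA.isPiece hT hX).finsum_neg_one_pow_sdim hA hT Subset.rfl

/-- The smallest flat of `A` containing `F`, i.e. the support of a face `F`. -/
def flatSpan (A : Set (Dehyperplane N n T)) (F : Set (Euc N)) : Set (Euc N) :=
  T ∩ ⋂ P ∈ {P ∈ A | F ⊆ P.P}, P.P

lemma subset_flatSpan (hF : F ⊆ T) : F ⊆ flatSpan A F :=
  subset_inter hF (subset_iInter₂ fun _ hP => hP.2)

lemma flatSpan_mem_flats (hne : F.Nonempty) (hF : F ⊆ T) : flatSpan A F ∈ flats A :=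
  ⟨hne.mono (subset_flatSpan hF), _, sep_subset _ _, rfl⟩

lemma flatSpan_subset_iff (hF : F ⊆ T) (hX : X ∈ flats A) : flatSpan A F ⊆ X ↔ F ⊆ X := by
  refine ⟨(subset_flatSpan hF).trans, fun hFX => ?_⟩
  obtain ⟨-, B, hB, rfl⟩ := hX
  refine inter_subset_inter_right _ (biInter_subset_biInter_left fun P hP => ⟨hB hP, ?_⟩)
  exact (hFX.trans inter_subset_right).trans (biInter_subset_of_mem hP)

lemma flatSpan_eq_self_iff : flatSpan A F = T ↔ ∀ P ∈ A, ¬F ⊆ P.P := by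
  refine ⟨fun h P hP hFP => ?_, fun h => ?_⟩
  · obtain ⟨x, hx⟩ := P.simPlus.1
    have hxT : x ∈ T := P.union_eq.subset (.inl (.inl hx))
    exact disjoint_left.1 P.disj_pP hx (mem_iInter₂.1 (h.superset hxT).2 P ⟨hP, hFP⟩)
  · rw [flatSpan, sep_eq_empty_iff_mem_false.2 h, biInter_empty, inter_univ]

lemma isChamber_iff : IsChamber A F ↔ F ∈ facesIn A T ∧ flatSpan A F = T := by
  rw [flatSpan_eq_self_iff]
  constructor
  · rintro ⟨⟨x, hx⟩, ε, hε, rfl⟩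
    refine ⟨⟨⟨x, hx⟩, ε, rfl⟩, fun P hP hFP => ?_⟩
    exact disjoint_left.1 (P.disjoint_part (hε P hP)) (mem_iInter₂.1 hx.2 P hP) (hFP hx)
  · rintro ⟨⟨hne, ε, rfl⟩, hF⟩
    refine ⟨hne, ε, fun P hP hε => hF P hP ?_, rfl⟩
    have hP' := (inter_subset_right (s := T)).trans (biInter_subset_of_mem (t := fun P =>
      P.part (ε P)) hP)
    rwa [hε] at hP'

lemma IsChamber.sdim_eq (hA : IsDA n T A) (hT : IsSimanifold n T) (hF : IsChamber A F) :
    sdim F = n := by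
  obtain ⟨hne, ε, hε, rfl⟩ := hF
  have hopen : T ∩ ⋂ P ∈ A, P.part (ε P) = T ∩ ⋂ P ∈ A, (closure (P.part (-ε P)))ᶜ := by
    ext x
    simp only [mem_inter_iff, mem_iInter₂]
    refine and_congr_right fun hx => forall₂_congr fun P hP => ?_
    simpa [hx] using Set.ext_iff.1 (P.inter_part_eq Subset.rfl (hε P hP)) x
  rw [hopen] at hne ⊢
  exact hT.sdim_inter_eq (hA.1.isOpen_biInter fun P _ => isClosed_closure.isOpen_compl) hne

lemma neg_one_pow_sub_eq {d n : ℕ} (h : d ≤ n) : (-1 : ℤ) ^ (n - d) = (-1) ^ n * (-1) ^ d := by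
  rw [← pow_sub_mul_pow (-1 : ℤ) h, mul_assoc, ← mul_pow, neg_one_mul, neg_neg, one_pow, mul_one]

lemma finsum_mem_sep_comm {α β M : Type*} [AddCommMonoid M] {s : Set α} {t : Set β}
    (r : α → β → Prop) (f : α → β → M) (hs : s.Finite) (ht : t.Finite) :
    ∑ᶠ a ∈ s, ∑ᶠ b ∈ {b ∈ t | r a b}, f a b = ∑ᶠ b ∈ t, ∑ᶠ a ∈ {a ∈ s | r a b}, f a b := by
  classical
  lift s to Finset α using hs
  lift t to Finset β using ht
  have hleft (a : α) : {b ∈ (t : Set β) | r a b} = ↑(t.filter (r a)) := by simp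
  have hright (b : β) : {a ∈ (s : Set α) | r a b} = ↑(s.filter (r · b)) := by simp
  simp only [hleft, hright, finsum_mem_coe_finset]
  exact Finset.sum_comm' (by simp; tauto)

open Classical in
lemma finsum_mem_ite_one_zero {α : Type*} {s : Set α} (hs : s.Finite) (p : α → Prop) :
    ∑ᶠ a ∈ s, (if p a then 1 else 0 : ℤ) = {a ∈ s | p a}.ncard := by
  lift s to Finset α using hs
  have hsep : {a ∈ (s : Set α) | p a} = ↑(s.filter p) := by simp
  rw [finsum_mem_coe_finset, Finset.sum_boole, hsep, ncard_coe_finset]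

open Classical in
lemma finsum_flats_eq_ite (hF : F ∈ facesIn A T) {m : Set (Euc N) → ℤ} (hmT : m T = 1)
    (hm : ∀ Y ∈ flats A, Y ≠ T → ∑ᶠ Z ∈ {Z ∈ flats A | Z ⊆ T ∧ Y ⊆ Z}, m Z = 0) :
    ∑ᶠ X ∈ {X ∈ flats A | F ⊆ X}, m X = if IsChamber A F then 1 else 0 := by
  have hFT : F ⊆ T := subset_of_mem_facesIn hF
  have hspan : flatSpan A F ∈ flats A := flatSpan_mem_flats hF.1 hFT
  have hset : {X ∈ flats A | F ⊆ X} = {Z ∈ flats A | Z ⊆ T ∧ flatSpan A F ⊆ Z} := by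
    ext X
    refine and_congr_right fun hX => ?_
    rw [flatSpan_subset_iff hFT hX, and_iff_right (subset_of_mem_flats hX)]
  rw [hset, isChamber_iff, and_iff_right hF]
  split_ifs with h
  · have hsingle : {Z ∈ flats A | Z ⊆ T ∧ flatSpan A F ⊆ Z} = {T} := by
      rw [h] at hspan ⊢
      ext Z
      refine ⟨fun hZ => hZ.2.1.antisymm hZ.2.2, ?_⟩
      rintro rfl
      exact ⟨hspan, Subset.rfl, Subset.rfl⟩
    rw [hsingle, finsum_mem_singleton, hmT]
  · exact hm _ hspan h

lemma IsDA.neg_one_pow_mul_eq_finsum (hA : IsDA n T A) (hT : IsSimanifold n T) (hX : X ∈ flats A)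
    (c : ℤ) : (-1) ^ (n - sdim X) * c =
      ∑ᶠ F ∈ {F ∈ facesIn A T | F ⊆ X}, (-1) ^ n * (-1) ^ sdim F * c := by
  obtain ⟨d, hdn, hd⟩ := hA.exists_isSimanifold hT hX
  rw [← finsum_mem_mul, ← mul_finsum_mem, hA.finsum_neg_one_pow_sdim hT hX,
    neg_one_pow_sub_eq (hd.sdim_eq.trans_le hdn)]

end Chambers

/-- the number of chambers of a DA `A` equals
`Σ_{X ∈ L_A} (−1)^{rk X} μ(T, X)` where `rk X = n − dim X` and `T` is the minimum flat. -/
theorem card_chambers_eq_moebius_sum {N n : ℕ} (hn : 1 ≤ n) {T : Set (Euc N)}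
    (hT : IsSimanifold n T) (A : Set (Dehyperplane N n T)) (hA : IsDA n T A)
    (mu : Set (Euc N) → Set (Euc N) → ℤ)
    (hmu0 : ∀ X ∈ flats A, ∀ Y ∈ flats A, ¬ Y ⊆ X → mu X Y = 0)
    (hmu1 : ∀ X ∈ flats A, mu X X = 1)
    (hmu2 : ∀ X ∈ flats A, ∀ Y ∈ flats A, Y ⊆ X → Y ≠ X →
      ∑ᶠ Z ∈ {Z ∈ flats A | Z ⊆ X ∧ Y ⊆ Z}, mu X Z = 0) :
    (Set.ncard {C | IsChamber A C} : ℤ) =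
      ∑ᶠ X ∈ flats A, (-1 : ℤ) ^ (n - sdim X) * mu T X := by
  classical
  have hfaces : (facesIn A T).Finite := finite_facesIn hA.1
  have hTA : T ∈ flats A := self_mem_flats hT.1
  symm
  calc ∑ᶠ X ∈ flats A, (-1 : ℤ) ^ (n - sdim X) * mu T X
    _ = ∑ᶠ X ∈ flats A, ∑ᶠ F ∈ {F ∈ facesIn A T | F ⊆ X}, (-1) ^ n * (-1) ^ sdim F * mu T X :=
      finsum_mem_congr rfl fun X hX => hA.neg_one_pow_mul_eq_finsum hT hX _
    _ = ∑ᶠ F ∈ facesIn A T, ∑ᶠ X ∈ {X ∈ flats A | F ⊆ X},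
          (-1) ^ n * (-1) ^ sdim F * mu T X :=
      finsum_mem_sep_comm (fun X F => F ⊆ X) _ (finite_flats hA.1) hfaces
    _ = ∑ᶠ F ∈ facesIn A T, if IsChamber A F then 1 else 0 := by
      refine finsum_mem_congr rfl fun F hF => ?_
      rw [← mul_finsum_mem,
        finsum_flats_eq_ite hF (hmu1 T hTA) fun Y hY => hmu2 T hTA Y hY (subset_of_mem_flats hY)]
      split_ifs with hC
      · rw [hC.sdim_eq hA hT, mul_one, ← mul_pow, neg_one_mul, neg_neg, one_pow]
      · rw [mul_zero]
    _ = {F ∈ facesIn A T | IsChamber A F}.ncard := finsum_mem_ite_one_zero hfaces _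
    _ = {C | IsChamber A C}.ncard := by
      have hsub : {C | IsChamber A C} ⊆ facesIn A T := fun C hC => (isChamber_iff.1 hC).1
      exact congrArg (fun s => (s.ncard : ℤ)) (sep_eq_of_subset hsub)
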